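/- arXiv:2007.14377 — 5 statements merged into one kernel-verified Lean document; each statement's English description precedes it below -/
import Mathlib

section
/- Let G be a graph and let δ be a nonnegative half-integer (i.e., 2δ is a nonnegative integer) such that G is δ-hyperbolic. If every family of pairwise intersecting disks of G, each having radius at most δ+1 (i.e., each radius r satisfies 2r ≤ 2δ+2), has a common vertex, then G is a Helly graph. -/
open SimpleGraph

/-- A graph is Helly if every family of pairwise intersecting disks has a common vertex. -/
def HellyGraph {V : Type*} (G : SimpleGraph V) : Prop :=
  ∀ (S : Set V) (r : V → ℕ),
    (∀ u ∈ S, ∀ v ∈ S, ∃ w, G.dist u w ≤ r u ∧ G.dist v w ≤ r v) →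
    ∃ c, ∀ v ∈ S, G.dist v c ≤ r v

/-- Local Helly property for families given as sets of (center, radius) pairs. -/
def LocHelly {V : Type*} (d : V → V → ℕ) (J : ℕ) : Prop :=
  ∀ T : Set (V × ℕ), (∀ p ∈ T, p.2 ≤ J) →
    (∀ p ∈ T, ∀ q ∈ T, d p.1 q.1 ≤ p.2 + q.2) → ∃ c, ∀ p ∈ T, d p.1 c ≤ p.2

/-- The metric facts we use. -/
structure DistLike {V : Type*} (d : V → V → ℕ) : Prop where
  self : ∀ x, d x x = 0
  symm : ∀ x y, d x y = d y x
  tri : ∀ x y z, d x z ≤ d x y + d y z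
  split : ∀ x y a b, d x y ≤ a + b → ∃ z, d x z ≤ a ∧ d z y ≤ b

theorem loc3 {V : Type*} {d : V → V → ℕ} (hd : DistLike d) {J : ℕ} (hl : LocHelly d J)
    (x y z : V) (a b c : ℕ) (ha : a ≤ J) (hb : b ≤ J) (hc : c ≤ J)
    (hxy : d x y ≤ a + b) (hxz : d x z ≤ a + c) (hyz : d y z ≤ b + c) :
    ∃ w, d x w ≤ a ∧ d y w ≤ b ∧ d z w ≤ c := by
  have h1 := hd.symm x y
  have h2 := hd.symm x z
  have h3 := hd.symm y z
  have sx := hd.self x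
  have sy := hd.self y
  have sz := hd.self z
  obtain ⟨w, hw⟩ := hl {(x, a), (y, b), (z, c)}
    (by
      intro p hp
      simp only [Set.mem_insert_iff, Set.mem_singleton_iff] at hp
      rcases hp with rfl | rfl | rfl <;> assumption)
    (by
      intro p hp q hq
      simp only [Set.mem_insert_iff, Set.mem_singleton_iff] at hp hq
      rcases hp with rfl | rfl | rfl <;> rcases hq with rfl | rfl | rfl <;>
        dsimp only <;> omega)
  exact ⟨w, hw (x, a) (by simp), hw (y, b) (by simp), hw (z, c) (by simp)⟩

/-- Three disks with radii `k, J, J`. -/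
theorem threeJ {V : Type*} {d : V → V → ℕ} (hd : DistLike d) {J : ℕ} (hJ : 1 ≤ J)
    (hl : LocHelly d J)
    (hyp : ∀ u v w x : V, d u v + d w x ≤ max (d u w + d v x) (d u x + d v w) + (2 * J - 1)) :
    ∀ k (v x c : V), d v x ≤ k + J → d v c ≤ k + J → d x c ≤ 2 * J →
      ∃ y, d v y ≤ k ∧ d x y ≤ J ∧ d c y ≤ J := by
  intro k
  induction k using Nat.strong_induction_on with
  | _ k ih =>
  intro v
  by_cases hkJ : k ≤ J
  · intro x c h1 h2 h3
    exact loc3 hd hl v x c k J J hkJ le_rfl le_rfl h1 h2 (by omega)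
  push Not at hkJ
  -- finishing step: a point `y` on both geodesics at small depth
  have fin : ∀ (x c y : V) (e : ℕ), e ≤ J → d x c ≤ 2 * J → d v y + e ≤ k →
      d x y ≤ J + e → d c y ≤ J + e → ∃ y, d v y ≤ k ∧ d x y ≤ J ∧ d c y ≤ J := by
    intro x c y e he h1 h2 h3 h4
    obtain ⟨w, w1, w2, w3⟩ := loc3 hd hl x c y J J e le_rfl le_rfl he (by omega) h3 h4
    have := hd.tri v y w
    exact ⟨w, by omega, w1, w2⟩
  -- points close to level `k - 1 + J`
  have low : ∀ (x c x' c' : V), d x c ≤ 2 * J → d x x' ≤ 1 → d c c' ≤ 1 →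
      d v x' ≤ k - 1 + J → d v c' ≤ k - 1 + J → d x' c' ≤ 2 * J →
      ∃ y, d v y ≤ k ∧ d x y ≤ J ∧ d c y ≤ J := by
    intro x c x' c' h0 h1 h2 h3 h4 h5
    obtain ⟨y, y1, y2, y3⟩ := ih (k - 1) (by omega) v x' c' h3 h4 h5
    have := hd.tri x x' y
    have := hd.tri c c' y
    exact fin x c y 1 hJ h0 (by omega) (by omega) (by omega)
  -- one step down
  have down : ∀ x, d v x ≤ k + J → ∃ x', d x x' ≤ 1 ∧ d v x' ≤ k - 1 + J := by
    intro x hx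
    obtain ⟨z, z1, z2⟩ := hd.split v x (k - 1 + J) 1 (by omega)
    exact ⟨z, by rw [hd.symm]; exact z2, z1⟩
  -- radius `J - 1`
  have sub : 2 ≤ J → ∀ x c, d v x ≤ k + J → d v c ≤ k + J → d x c ≤ 2 * J - 2 →
      ∃ y, d v y ≤ k + 1 ∧ d x y ≤ J - 1 ∧ d c y ≤ J - 1 := by
    intro hJ2 x c h1 h2 h3
    obtain ⟨x', x1, x2⟩ := down x h1
    obtain ⟨c', c1, c2⟩ := down c h2
    have t1 := hd.tri x' x c'
    have t2 := hd.tri x c c'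
    have t3 := hd.symm x' x
    obtain ⟨y, y1, y2, y3⟩ := ih (k - 1) (by omega) v x' c' x2 c2 (by omega)
    have t4 := hd.tri x x' y
    have t5 := hd.tri c c' y
    obtain ⟨w, w1, w2, w3⟩ := loc3 hd hl x c y (J - 1) (J - 1) 2 (by omega) (by omega) hJ2
      (by omega) (by omega) (by omega)
    have := hd.tri v y w
    exact ⟨w, by omega, w1, w2⟩
  -- odd case
  have odd : ∀ x c, d v x ≤ k + J → d v c ≤ k + J → d x c ≤ 2 * J - 1 →
      ∃ y, d v y ≤ k ∧ d x y ≤ J ∧ d c y ≤ J := by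
    intro x c h1 h2 h3
    obtain ⟨x', x1, x2⟩ := down x h1
    obtain ⟨c', c1, c2⟩ := down c h2
    by_cases hD : d x' c' ≤ 2 * J
    · exact low x c x' c' (by omega) x1 c1 x2 c2 hD
    obtain ⟨z, z1, z2⟩ := hd.split x c (J - 1) J (by omega)
    have s1 := hd.symm x' x
    have s2 := hd.symm c' z
    have s3 := hd.symm z v
    have s4 := hd.symm x' v
    have s5 := hd.symm c' v
    have t1 := hd.tri x' x z
    have t2 := hd.tri z c c'
    have h4 := hyp x' c' z v
    have hz : d v z ≤ k + J + (J - 1) - 1 := by omega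
    by_cases hJ1 : J = 1
    · have t3 := hd.tri v z x
      have s6 := hd.symm x z
      have t4 := hd.tri x c c'
      exact low x c x c' (by omega) (by rw [hd.self]; omega) c1 (by omega) c2 (by omega)
    obtain ⟨z', z3, z4⟩ := hd.split v z (k + J) (J - 2) (by omega)
    have s7 := hd.symm z' z
    have s8 := hd.symm c z
    have s9 := hd.symm c z'
    have t5 := hd.tri x z z'
    have t6 := hd.tri c z z'
    obtain ⟨p, p1, p2, p3⟩ := sub (by omega) x z' h1 z3 (by omega)
    obtain ⟨q, q1, q2, q3⟩ := sub (by omega) c z' h2 z3 (by omega)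
    have t7 := hd.tri p z' q
    have s10 := hd.symm p z'
    obtain ⟨y, y1, y2, y3⟩ := ih (k + 1 - J) (by omega) v p q (by omega) (by omega) (by omega)
    have t8 := hd.tri x p y
    have t9 := hd.tri c q y
    exact fin x c y (J - 1) (by omega) (by omega) (by omega) (by omega) (by omega)
  intro x c h1 h2 h3
  by_cases h4 : d x c ≤ 2 * J - 1
  · exact odd x c h1 h2 h4
  obtain ⟨z, z1, z2⟩ := hd.split x c J J (by omega)
  have h5 := hyp x c z v
  have s1 := hd.symm x v
  have s2 := hd.symm c v
  have s3 := hd.symm z v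
  have s4 := hd.symm c z
  obtain ⟨z', z3, z4⟩ := hd.split v z (k + J) (J - 1) (by omega)
  have s5 := hd.symm z' z
  have t1 := hd.tri x z z'
  have t2 := hd.tri c z z'
  obtain ⟨p, p1, p2, p3⟩ := odd x z' h1 z3 (by omega)
  obtain ⟨q, q1, q2, q3⟩ := odd c z' h2 z3 (by omega)
  have t3 := hd.tri p z' q
  have s6 := hd.symm p z'
  obtain ⟨y, y1, y2, y3⟩ := ih (k - J) (by omega) v p q (by omega) (by omega) (by omega)
  have t4 := hd.tri x p y
  have t5 := hd.tri c q y
  exact fin x c y J le_rfl h3 (by omega) (by omega) (by omega)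

/-- Smaller equal radii. -/
theorem threej {V : Type*} {d : V → V → ℕ} (hd : DistLike d) {J : ℕ} (hJ : 1 ≤ J)
    (hl : LocHelly d J)
    (hE : ∀ k (v x c : V), d v x ≤ k + J → d v c ≤ k + J → d x c ≤ 2 * J →
      ∃ y, d v y ≤ k ∧ d x y ≤ J ∧ d c y ≤ J) :
    ∀ i j, i + j = J → ∀ k (v x c : V), d v x ≤ k + j → d v c ≤ k + j → d x c ≤ 2 * j →
      ∃ y, d v y ≤ k ∧ d x y ≤ j ∧ d c y ≤ j := by
  intro i
  induction i with
  | zero =>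
    intro j hj
    obtain rfl : j = J := by omega
    exact hE
  | succ i ih =>
    intro j hj k v x c h1 h2 h3
    rcases Nat.eq_zero_or_pos k with rfl | hk
    · exact loc3 hd hl v x c 0 j j (by omega) (by omega) (by omega) h1 h2 (by omega)
    obtain ⟨y, y1, y2, y3⟩ := ih (j + 1) (by omega) (k - 1) v x c (by omega) (by omega) (by omega)
    obtain ⟨w, w1, w2, w3⟩ := loc3 hd hl x c y j j 1 (by omega) (by omega) hJ
      (by omega) (by omega) (by omega)
    have := hd.tri v y w
    exact ⟨w, by omega, w1, w2⟩

/-- Three disks, one of radius 1. -/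
theorem three1 {V : Type*} {d : V → V → ℕ} (hd : DistLike d)
    (hE : ∀ k (v x c : V), d v x ≤ k + 1 → d v c ≤ k + 1 → d x c ≤ 2 →
      ∃ y, d v y ≤ k ∧ d x y ≤ 1 ∧ d c y ≤ 1) :
    ∀ a b (c u v : V), d c u ≤ a + 1 → d c v ≤ b + 1 → d u v ≤ a + b →
      ∃ y, d c y ≤ 1 ∧ d u y ≤ a ∧ d v y ≤ b := by
  intro a
  induction a with
  | zero =>
    intro b c u v h1 h2 h3
    have := hd.self u
    have := hd.symm u v
    exact ⟨u, by omega, by omega, by omega⟩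
  | succ a ih =>
    intro b c u v h1 h2 h3
    obtain ⟨w, w1, w2⟩ := hd.split c u 1 (a + 1) (by omega)
    have s1 := hd.symm c w
    have t1 := hd.tri w c v
    obtain ⟨y, y1, y2, y3⟩ := ih (b + 1) w u v w2 (by omega) (by omega)
    have t2 := hd.tri c w y
    have s2 := hd.symm c v
    obtain ⟨q, q1, q2, q3⟩ := hE b v c y (by omega) y3 (by omega)
    have t3 := hd.tri u y q
    exact ⟨q, q2, by omega, q1⟩

/-- One big disk and unit disks. -/
theorem bigUnit {V : Type*} {d : V → V → ℕ} (hd : DistLike d)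
    (hl : LocHelly d 1)
    (hE : ∀ k (v x c : V), d v x ≤ k + 1 → d v c ≤ k + 1 → d x c ≤ 2 →
      ∃ y, d v y ≤ k ∧ d x y ≤ 1 ∧ d c y ≤ 1) (u : V) :
    ∀ R (A : Finset V), (∀ p ∈ A, d u p ≤ R + 1) → (∀ p ∈ A, ∀ q ∈ A, d p q ≤ 2) →
      ∃ y, d u y ≤ R ∧ ∀ p ∈ A, d p y ≤ 1 := by
  classical
  intro R
  induction R with
  | zero =>
    intro A h1 _
    have := hd.self u
    refine ⟨u, by omega, fun p hp => ?_⟩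
    have := h1 p hp
    rw [hd.symm]; omega
  | succ R ihR =>
    intro A
    induction hn : A.card using Nat.strong_induction_on generalizing A with
    | _ n ih =>
    intro h1 h2
    by_cases hc : 2 < A.card
    · obtain ⟨a, b, c, ha, hb, hc, hab, hac, hbc⟩ := Finset.two_lt_card_iff.1 hc
      have key : ∀ e ∈ A, ∃ y, d u y ≤ R + 1 ∧ ∀ p ∈ A, p ≠ e → d p y ≤ 1 := by
        intro e he
        obtain ⟨y, y1, y2⟩ := ih (A.erase e).card (by
            rw [← hn]; exact Finset.card_erase_lt_of_mem he) (A.erase e) rfl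
          (fun p hp => h1 p (Finset.mem_of_mem_erase hp))
          (fun p hp q hq => h2 p (Finset.mem_of_mem_erase hp) q (Finset.mem_of_mem_erase hq))
        exact ⟨y, y1, fun p hp hpe => y2 p (Finset.mem_erase.2 ⟨hpe, hp⟩)⟩
      obtain ⟨qa, qa1, qa2⟩ := key a ha
      obtain ⟨qb, qb1, qb2⟩ := key b hb
      obtain ⟨qc, qc1, qc2⟩ := key c hc
      have two : ∀ p x y, d p x ≤ 1 → d p y ≤ 1 → d x y ≤ 2 := by
        intro p x y hx hy
        have := hd.tri x p y
        have := hd.symm x p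
        omega
      have e1 := two c qa qb (qa2 c hc (Ne.symm hac)) (qb2 c hc (Ne.symm hbc))
      have e2 := two b qa qc (qa2 b hb (Ne.symm hab)) (qc2 b hb hbc)
      have e3 := two a qb qc (qb2 a ha hab) (qc2 a ha hac)
      have f1 := hd.symm qa qb
      have f2 := hd.symm qa qc
      have f3 := hd.symm qb qc
      have g1 := hd.self qa
      have g2 := hd.self qb
      have g3 := hd.self qc
      obtain ⟨y, y1, y2⟩ := ihR {qa, qb, qc}
        (by
          intro p hp
          simp only [Finset.mem_insert, Finset.mem_singleton] at hp
          rcases hp with rfl | rfl | rfl <;> assumption)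
        (by
          intro p hp q hq
          simp only [Finset.mem_insert, Finset.mem_singleton] at hp hq
          rcases hp with rfl | rfl | rfl <;> rcases hq with rfl | rfl | rfl <;> omega)
      have hay := y2 qa (by simp)
      have hby := y2 qb (by simp)
      have hy : ∀ p ∈ A, d p y ≤ 2 := by
        intro p hp
        by_cases hpa : p = a
        · have := qb2 p hp (by rw [hpa]; exact hab)
          have := hd.tri p qb y
          omega
        · have := qa2 p hp hpa
          have := hd.tri p qa y
          omega
      have hyy := hd.self y
      obtain ⟨w, hw⟩ := hl {p | p.2 = 1 ∧ (p.1 ∈ A ∨ p.1 = y)}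
        (fun p hp => hp.1.le)
        (by
          rintro ⟨p, r⟩ ⟨hr, hp⟩ ⟨q, s⟩ ⟨hs, hq⟩
          dsimp only at *
          subst hr hs
          rcases hp with hp | rfl <;> rcases hq with hq | rfl
          · exact h2 p hp q hq
          · exact hy p hp
          · rw [hd.symm]; exact hy q hq
          · omega)
      have hyw := hw (y, 1) ⟨rfl, Or.inr rfl⟩
      dsimp only at hyw
      have := hd.tri u y w
      exact ⟨w, by omega, fun p hp => hw (p, 1) ⟨rfl, Or.inl hp⟩⟩
    · rcases A.eq_empty_or_nonempty with rfl | ⟨a, ha⟩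
      · exact ⟨u, by rw [hd.self]; omega, by simp⟩
      · have : ∃ b ∈ A, ∀ p ∈ A, p = a ∨ p = b := by
          by_contra hcon
          push Not at hcon
          obtain ⟨b, hb, hba, -⟩ := hcon a ha
          obtain ⟨c, hc', hca, hcb⟩ := hcon b hb
          exact hc (Finset.two_lt_card_iff.2
            ⟨a, b, c, ha, hb, hc', Ne.symm hba, Ne.symm hca, Ne.symm hcb⟩)
        obtain ⟨b, hb, hab⟩ := this
        obtain ⟨y, y1, y2, y3⟩ := hE (R + 1) u a b (h1 a ha) (h1 b hb) (h2 a ha b hb)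
        refine ⟨y, y1, fun p hp => ?_⟩
        rcases hab p hp with rfl | rfl <;> assumption

/-- From three-disk property and unit Helly property to the Helly property. -/
theorem helly_aux {V : Type*} [Fintype V] {d : V → V → ℕ} (hd : DistLike d) (c₀ : V)
    (hl : LocHelly d 1)
    (hE : ∀ k (v x c : V), d v x ≤ k + 1 → d v c ≤ k + 1 → d x c ≤ 2 →
      ∃ y, d v y ≤ k ∧ d x y ≤ 1 ∧ d c y ≤ 1)
    (S : Set V) (r : V → ℕ) (hS : ∀ u ∈ S, ∀ v ∈ S, d u v ≤ r u + r v) :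
    ∃ c, ∀ v ∈ S, d v c ≤ r v := by
  classical
  have step : ∀ k, (∃ c, ∀ v ∈ S, d v c ≤ r v + (k + 1)) → ∃ c, ∀ v ∈ S, d v c ≤ r v + k := by
    rintro k ⟨c, hc⟩
    by_cases h0 : ∃ u ∈ S, r u + k = 0
    · obtain ⟨u, hu, hu0⟩ := h0
      refine ⟨u, fun v hv => ?_⟩
      have := hS v hv u hu
      omega
    push Not at h0
    have gate : ∀ u : V, ∃ u', u ∈ S → d u u' + 1 ≤ r u + k ∧
        ∀ p, d c p ≤ 1 → d u p ≤ r u + k → d p u' ≤ 1 := by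
      intro u
      by_cases hu : u ∈ S
      swap
      · exact ⟨u, fun h => absurd h hu⟩
      have hpos := h0 u hu
      obtain ⟨y, y1, y2⟩ := bigUnit hd hl hE u (r u + k - 1)
        (Finset.univ.filter fun p => d c p ≤ 1 ∧ d u p ≤ r u + k)
        (by
          intro p hp
          have := (Finset.mem_filter.1 hp).2.2
          omega)
        (by
          intro p hp q hq
          have h1 := (Finset.mem_filter.1 hp).2.1
          have h2 := (Finset.mem_filter.1 hq).2.1
          have := hd.tri p c q
          have := hd.symm p c
          omega)
      exact ⟨y, fun _ => ⟨by omega, fun p h1 h2 =>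
        y2 p (Finset.mem_filter.2 ⟨Finset.mem_univ _, h1, h2⟩)⟩⟩
    choose g hg using gate
    obtain ⟨w, hw⟩ := hl {p | p.2 = 1 ∧ ∃ u ∈ S, p.1 = g u}
      (fun p hp => hp.1.le)
      (by
        rintro ⟨p, a⟩ ⟨ha, u, hu, hp⟩ ⟨q, b⟩ ⟨hb, v, hv, hq⟩
        dsimp only at *
        subst ha hb hp hq
        have e1 := hd.symm c u
        have e2 := hd.symm c v
        have e3 := hc u hu
        have e4 := hc v hv
        have e5 := hS u hu v hv
        obtain ⟨y, y1, y2, y3⟩ := three1 hd hE (r u + k) (r v + k) c u v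
          (by omega) (by omega) (by omega)
        have f1 := (hg u hu).2 y y1 y2
        have f2 := (hg v hv).2 y y1 y3
        have f3 := hd.tri (g u) y (g v)
        have f4 := hd.symm (g u) y
        omega)
    refine ⟨w, fun v hv => ?_⟩
    have f1 := hw (g v, 1) ⟨rfl, v, hv, rfl⟩
    dsimp only at f1
    have f2 := (hg v hv).1
    have f3 := hd.tri v (g v) w
    omega
  have desc : ∀ k, (∃ c, ∀ v ∈ S, d v c ≤ r v + k) → ∃ c, ∀ v ∈ S, d v c ≤ r v := by
    intro k
    induction k with
    | zero => exact fun h => h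
    | succ k ih => exact fun h => ih (step k h)
  refine desc (Finset.univ.sup fun v => d v c₀) ⟨c₀, fun v _ => ?_⟩
  have := Finset.le_sup (f := fun v => d v c₀) (Finset.mem_univ v)
  omega

theorem distLike_of_connected {V : Type*} (G : SimpleGraph V) (hconn : G.Connected) :
    DistLike G.dist where
  self x := by simp
  symm x y := G.dist_comm
  tri x y z := hconn.dist_triangle
  split x y a b h := by
    obtain ⟨p, hp⟩ := hconn.exists_walk_length_eq_dist x y
    refine ⟨p.getVert a, ?_, ?_⟩
    · refine (SimpleGraph.dist_le (p.take a)).trans ?_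
      rw [SimpleGraph.Walk.take_length]
      omega
    · refine (SimpleGraph.dist_le (p.drop a)).trans ?_
      rw [SimpleGraph.Walk.drop_length]
      omega

/-- If `G` is `δ`-hyperbolic (where `δ2 = 2δ`) and every family of pairwise intersecting
disks of radii at most `δ + 1` (i.e. `2r ≤ 2δ + 2`) has a common vertex, then `G` is a
Helly graph. -/
theorem helly_of_hyperbolic_of_local_helly
    {V : Type*} [Fintype V] (G : SimpleGraph V) (hconn : G.Connected)
    (δ2 : ℕ)
    (hhyp : ∀ u v w x : V,
      G.dist u v + G.dist w x ≤
        max (G.dist u w + G.dist v x) (G.dist u x + G.dist v w) + δ2)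
    (hloc : ∀ (S : Set V) (r : V → ℕ),
      (∀ v ∈ S, 2 * r v ≤ δ2 + 2) →
      (∀ u ∈ S, ∀ v ∈ S, ∃ w, G.dist u w ≤ r u ∧ G.dist v w ≤ r v) →
      ∃ c, ∀ v ∈ S, G.dist v c ≤ r v) :
    HellyGraph G := by
  have hd := distLike_of_connected G hconn
  have hl : LocHelly G.dist (δ2 / 2 + 1) := by
    intro T hT hT2
    have hmem : ∀ v ∈ Prod.fst '' T, (v, sInf {n | (v, n) ∈ T}) ∈ T := by
      rintro _ ⟨⟨v, n⟩, hv, rfl⟩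
      exact Nat.sInf_mem (s := {n | (v, n) ∈ T}) ⟨n, hv⟩
    obtain ⟨c, hc⟩ := hloc (Prod.fst '' T) (fun v => sInf {n | (v, n) ∈ T})
      (by
        intro v hv
        have := hT _ (hmem v hv)
        dsimp only at this ⊢
        omega)
      (by
        intro u hu v hv
        obtain ⟨z, z1, z2⟩ := hd.split u v _ _ (hT2 _ (hmem u hu) _ (hmem v hv))
        exact ⟨z, z1, by rw [hd.symm]; exact z2⟩)
    refine ⟨c, ?_⟩
    rintro ⟨v, n⟩ hv
    exact (hc v ⟨_, hv, rfl⟩).trans (Nat.sInf_le hv)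
  have hl1 : LocHelly G.dist 1 := fun T h1 h2 =>
    hl T (fun p hp => (h1 p hp).trans (by omega)) h2
  have hE := threeJ hd (J := δ2 / 2 + 1) (by omega) hl
    (fun u v w x => (hhyp u v w x).trans (by omega))
  have hE1 := threej hd (by omega) hl hE (δ2 / 2) 1 rfl
  obtain ⟨c₀⟩ := hconn.nonempty
  intro S r hS
  refine helly_aux hd c₀ hl1 hE1 S r ?_
  intro u hu v hv
  obtain ⟨w, w1, w2⟩ := hS u hu v hv
  have := hd.tri u w v
  have := hd.symm w v
  omega
end

section
/- If G is a Helly graph that contains no induced wheel W_k for any k ≥ 4, then G is chordal. -/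
open SimpleGraph

/-- `G` contains the cycle `C_n` as an induced subgraph. -/
def HasInducedCycle {V : Type*} (G : SimpleGraph V) (n : ℕ) : Prop :=
  ∃ f : Fin n → V, Function.Injective f ∧
    ∀ i j, (cycleGraph n).Adj i j ↔ G.Adj (f i) (f j)

/-- `G` is chordal: it has no induced cycle of length at least 4. -/
def Chordal {V : Type*} (G : SimpleGraph V) : Prop :=
  ∀ n, 4 ≤ n → ¬ HasInducedCycle G n

/-- `G` contains the wheel `W_k` (a `k`-cycle plus a vertex adjacent to all of its
vertices) as an induced subgraph. -/
def HasInducedWheel {V : Type*} (G : SimpleGraph V) (k : ℕ) : Prop :=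
  ∃ (f : Fin k → V) (c : V), Function.Injective f ∧ c ∉ Set.range f ∧
    (∀ i j, (cycleGraph k).Adj i j ↔ G.Adj (f i) (f j)) ∧
    ∀ i, G.Adj c (f i)

/-- `p 0, …, p (n-1)` is an induced cycle of `G`. -/
def IndCyc {V : Type*} (G : SimpleGraph V) (n : ℕ) (p : ℕ → V) : Prop :=
  ∀ i j, i < j → j < n → p i ≠ p j ∧ (G.Adj (p i) (p j) ↔ j = i + 1 ∨ (i = 0 ∧ j + 1 = n))

/-- `A` is isometric in `G` (in a local form). -/
def IsoIn {V : Type*} (G : SimpleGraph V) (A : Finset V) : Prop :=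
  ∀ x ∈ A, ∀ y ∈ A, x ≠ y → ∃ w ∈ A, G.Adj w y ∧ G.dist x w + 1 = G.dist x y

/-- The Helly property relative to `A`. -/
def HellyIn {V : Type*} (G : SimpleGraph V) (A : Finset V) : Prop :=
  ∀ (S : Set V) (r : V → ℕ), S ⊆ A →
    (∀ u ∈ S, ∀ v ∈ S, ∃ w ∈ A, G.dist u w ≤ r u ∧ G.dist v w ≤ r v) →
    ∃ c ∈ A, ∀ v ∈ S, G.dist v c ≤ r v

lemma dist_le_one {V : Type*} {G : SimpleGraph V} (hc : G.Connected) {x y : V} :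
    G.dist x y ≤ 1 ↔ x = y ∨ G.Adj x y := by
  constructor
  · intro h
    rcases Nat.le_one_iff_eq_zero_or_eq_one.1 h with h | h
    · exact Or.inl (hc.dist_eq_zero_iff.1 h)
    · exact Or.inr (SimpleGraph.dist_eq_one_iff_adj.1 h)
  · rintro (rfl | h)
    · simp
    · exact (SimpleGraph.dist_eq_one_iff_adj.2 h).le

lemma cyc_adj {n : ℕ} (hn : 4 ≤ n) (i j : Fin n) (h : i < j) :
    (cycleGraph n).Adj i j ↔ (j : ℕ) = i + 1 ∨ ((i : ℕ) = 0 ∧ (j : ℕ) + 1 = n) := by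
  rw [cycleGraph_adj', Fin.coe_sub_iff_lt.2 h, Fin.coe_sub_iff_le.2 h.le]
  have := Fin.lt_def.1 h
  have := j.2
  omega

lemma exists_dominated {V : Type*} {G : SimpleGraph V} (hc : G.Connected) {A : Finset V}
    (hI : IsoIn G A) (hH : HellyIn G A) {z z' : V} (hz : z ∈ A) (hz' : z' ∈ A) (hne : z ≠ z') :
    ∃ v ∈ A, ∃ u ∈ A, u ≠ v ∧ ∀ w ∈ A, G.dist w v ≤ 1 → G.dist w u ≤ 1 := by
  classical
  obtain ⟨v, hv, hmax⟩ := A.exists_max_image (fun x => G.dist z x) ⟨z, hz⟩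
  have hk : 1 ≤ G.dist z v := le_trans (hc.pos_dist_of_ne hne) (hmax z' hz')
  have key : ∀ w ∈ A, ∃ x ∈ A, G.dist z x ≤ G.dist z v - 1 ∧ G.dist w x ≤ 1 := by
    intro w hw
    by_cases h : z = w
    · subst h; exact ⟨z, hz, by simp, by simp⟩
    · obtain ⟨x, hx, hxa, hxd⟩ := hI z hz w hw h
      have := hmax w hw
      exact ⟨x, hx, by omega, (dist_le_one hc).2 (Or.inr hxa.symm)⟩
  obtain ⟨u, hu, hu'⟩ := hH {w | w ∈ A ∧ (w = z ∨ G.dist w v ≤ 1)}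
    (fun w => if w = z then G.dist z v - 1 else 1) (fun w hw => hw.1) (by
      rintro a ⟨ha, ha'⟩ b ⟨hb, hb'⟩
      by_cases h1 : a = z
      · subst h1
        by_cases h2 : b = a
        · subst h2; exact ⟨b, hb, by simp, by simp⟩
        · simpa [h2] using key b hb
      · by_cases h2 : b = z
        · subst h2
          obtain ⟨x, hx, h3, h4⟩ := key a ha
          exact ⟨x, hx, by simpa [h1] using h4, by simpa using h3⟩
        · exact ⟨v, hv, by simpa [h1] using ha', by simpa [h2] using hb'⟩)
  have h0 : G.dist z u ≤ G.dist z v - 1 := by simpa using hu' z ⟨hz, Or.inl rfl⟩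
  refine ⟨v, hv, u, hu, ?_, ?_⟩
  · rintro rfl; omega
  · intro w hw hwv
    by_cases h : w = z
    · subst h; omega
    · simpa [h] using hu' w ⟨hw, Or.inr hwv⟩

lemma dist_fold {V : Type*} {G : SimpleGraph V} (hc : G.Connected) {A : Finset V}
    (hI : IsoIn G A) {u v : V} (hv : v ∈ A)
    (hd : ∀ w ∈ A, G.dist w v ≤ 1 → G.dist w u ≤ 1) {x : V} (hx : x ∈ A) (hxv : x ≠ v) :
    G.dist x u ≤ G.dist x v := by
  obtain ⟨w, hw, hwa, hwd⟩ := hI x hx v hv hxv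
  have := hd w hw ((dist_le_one hc).2 (Or.inr hwa))
  have := hc.dist_triangle (u := x) (v := w) (w := u)
  omega

lemma rotate {V : Type*} {G : SimpleGraph V} {n : ℕ} {p : ℕ → V} (h : IndCyc G n p)
    (s : ℕ) (hs : s < n) : IndCyc G n (fun i => if i + s < n then p (i + s) else p (i + s - n)) := by
  intro i j hij hj
  by_cases h1 : i + s < n <;> by_cases h2 : j + s < n <;> simp only [h1, h2, if_true, if_false]
  · obtain ⟨a, b⟩ := h (i + s) (j + s) (by omega) h2
    exact ⟨a, b.trans (by omega)⟩
  · obtain ⟨a, b⟩ := h (j + s - n) (i + s) (by omega) h1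
    exact ⟨a.symm, (G.adj_comm _ _).trans (b.trans (by omega))⟩
  · omega
  · obtain ⟨a, b⟩ := h (i + s - n) (j + s - n) (by omega) (by omega)
    exact ⟨a, b.trans (by omega)⟩

lemma wheel_of {V : Type*} {G : SimpleGraph V} {n : ℕ} (hn : 4 ≤ n) {p : ℕ → V}
    (h : IndCyc G n p) (u : V) (hu : ∀ i < n, G.Adj u (p i)) : HasInducedWheel G n := by
  refine ⟨fun i => p i, u, ?_, ?_, ?_, fun i => hu i i.2⟩
  · intro i j hij
    rcases lt_trichotomy i j with h1 | h1 | h1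
    · exact absurd hij (h i j h1 j.2).1
    · exact h1
    · exact absurd hij.symm (h j i h1 i.2).1
  · rintro ⟨i, rfl⟩
    exact G.loopless.irrefl _ (hu i i.2)
  · intro i j
    rcases lt_trichotomy i j with h1 | h1 | h1
    · rw [cyc_adj hn i j h1]; exact (h i j h1 j.2).2.symm
    · subst h1; simp
    · rw [SimpleGraph.adj_comm, cyc_adj hn j i h1, G.adj_comm]; exact (h j i h1 i.2).2.symm

/-- A vertex adjacent to the ends of an induced path but not to all of it closes an induced cycle. -/
lemma gap {V : Type*} {G : SimpleGraph V} {n : ℕ} {p : ℕ → V}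
    (h : IndCyc G n p) (u : V) (hup : ∀ i < n, u ≠ p i) (h1 : G.Adj u (p 1))
    (h2 : G.Adj u (p (n - 1))) (k : ℕ) (hk1 : 1 ≤ k) (hkn : k < n) (hk : ¬ G.Adj u (p k)) :
    ∃ m q, 4 ≤ m ∧ IndCyc G m q ∧ ∀ i < m, q i = u ∨ ∃ j, 1 ≤ j ∧ j < n ∧ q i = p j := by
  classical
  have hk1' : k ≠ 1 := by rintro rfl; exact hk h1
  have hkn' : k ≠ n - 1 := by rintro rfl; exact hk h2
  obtain ⟨a, ha, hamax⟩ := ((Finset.range k).filter (fun i => 1 ≤ i ∧ G.Adj u (p i))).exists_max_image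
    id ⟨1, by simp; exact ⟨by omega, h1⟩⟩
  obtain ⟨b, hb, hbmin⟩ := ((Finset.range n).filter (fun i => k < i ∧ G.Adj u (p i))).exists_min_image
    id ⟨n - 1, by simp; exact ⟨by omega, by omega, h2⟩⟩
  simp only [Finset.mem_filter, Finset.mem_range, id, and_imp] at ha hamax hb hbmin
  obtain ⟨hak, ha1, hau⟩ := ha
  obtain ⟨hbn, hkb, hbu⟩ := hb
  have hmid : ∀ i, a < i → i < b → ¬ G.Adj u (p i) := by
    intro i hai hib hui
    rcases lt_trichotomy i k with h3 | h3 | h3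
    · have := hamax i h3 (by omega) hui; omega
    · subst h3; exact hk hui
    · have := hbmin i (by omega) h3 hui; omega
  refine ⟨b - a + 2, fun i => if i = 0 then u else p (a + i - 1), by omega, ?_, ?_⟩
  · intro i j hij hj
    have hj0 : j ≠ 0 := by omega
    by_cases hi : i = 0
    · subst hi
      simp only [hj0, if_true, if_false]
      refine ⟨hup _ (by omega), ?_⟩
      constructor
      · intro hadj
        by_contra hcon
        have hc1 : j ≠ 1 := fun h => hcon (Or.inl (by omega))
        have hc2 : j + 1 ≠ b - a + 2 := fun h => hcon (Or.inr ⟨trivial, h⟩)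
        exact hmid (a + j - 1) (by omega) (by omega) hadj
      · rintro (h3 | h3)
        · subst h3; simpa using hau
        · have : a + j - 1 = b := by omega
          rw [this]; exact hbu
    · simp only [hi, hj0, if_false]
      obtain ⟨e, f⟩ := h (a + i - 1) (a + j - 1) (by omega) (by omega)
      refine ⟨e, f.trans ⟨?_, ?_⟩⟩
      · rintro (h3 | ⟨h3, h4⟩)
        · left; omega
        · omega
      · rintro (h3 | ⟨h3, h4⟩)
        · left; omega
        · exact h3.elim
  · intro i hi
    by_cases h0 : i = 0
    · simp [h0]
    · right
      exact ⟨a + i - 1, by omega, by omega, by simp [h0]⟩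

lemma main_aux {V : Type*} (G : SimpleGraph V) (hc : G.Connected)
    (hwheel : ∀ k, 4 ≤ k → ¬ HasInducedWheel G k) (N : ℕ) :
    ∀ A : Finset V, A.card = N → IsoIn G A → HellyIn G A →
      ∀ n p, 4 ≤ n → (∀ i < n, p i ∈ A) → ¬ IndCyc G n p := by
  classical
  induction N with
  | zero =>
    intro A hA _ _ n p hn hp _
    have := hp 0 (by omega)
    simp [Finset.card_eq_zero.1 hA] at this
  | succ N ih =>
    intro A hA hI hH n p hn hp hcyc
    obtain ⟨v, hv, u, hu, huv, hd⟩ := exists_dominated hc hI hH (hp 0 (by omega)) (hp 1 (by omega))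
      (hcyc 0 1 (by omega) (by omega)).1
    have hI' : IsoIn G (A.erase v) := by
      intro x hx y hy hxy
      obtain ⟨hxv, hxA⟩ := Finset.mem_erase.1 hx
      obtain ⟨hyv, hyA⟩ := Finset.mem_erase.1 hy
      obtain ⟨w, hw, hwa, hwd⟩ := hI x hxA y hyA hxy
      by_cases h : w = v
      · subst h
        have h1 := dist_fold hc hI hv hd hxA hxv
        have h2 := hd y hyA ((dist_le_one hc).2 (Or.inr hwa.symm))
        have h3 := hc.dist_triangle (u := x) (v := u) (w := y)
        rw [G.dist_comm (u := u)] at h3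
        refine ⟨u, Finset.mem_erase.2 ⟨huv, hu⟩, ?_, by omega⟩
        exact (SimpleGraph.dist_eq_one_iff_adj.1 (by omega)).symm
      · exact ⟨w, Finset.mem_erase.2 ⟨h, hw⟩, hwa, hwd⟩
    have hH' : HellyIn G (A.erase v) := by
      intro S r hS hpair
      obtain ⟨c, hcA, hcS⟩ := hH S r (fun x hx => Finset.mem_of_mem_erase (hS hx)) (by
        intro a ha b hb
        obtain ⟨w, hw, h⟩ := hpair a ha b hb
        exact ⟨w, Finset.mem_of_mem_erase hw, h⟩)
      by_cases h : c = v
      · subst h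
        refine ⟨u, Finset.mem_erase.2 ⟨huv, hu⟩, fun x hx => ?_⟩
        obtain ⟨hxv, hxA⟩ := Finset.mem_erase.1 (hS hx)
        exact (dist_fold hc hI hv hd hxA hxv).trans (hcS x hx)
      · exact ⟨c, Finset.mem_erase.2 ⟨h, hcA⟩, hcS⟩
    have IH := ih (A.erase v) (by rw [Finset.card_erase_of_mem hv]; omega) hI' hH'
    by_cases hvp : ∃ s < n, p s = v
    · obtain ⟨s, hs, hsv⟩ := hvp
      obtain ⟨q, hq, hqA, hq0⟩ : ∃ q, IndCyc G n q ∧ (∀ i < n, q i ∈ A) ∧ q 0 = v := by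
        refine ⟨_, rotate hcyc s hs, ?_, ?_⟩
        · intro i hi
          by_cases h : i + s < n
          · simp only [h, if_true]; exact hp _ h
          · simp only [h, if_false]; exact hp _ (by omega)
        · simp [hs, hsv]
      have hdq : ∀ i < n, (i = 0 ∨ i = 1 ∨ i + 1 = n) → G.dist (q i) u ≤ 1 := by
        intro i hi hi'
        apply hd _ (hqA i hi)
        rw [dist_le_one hc, ← hq0]
        by_cases h0 : i = 0
        · left; rw [h0]
        · right; exact ((hq 0 i (by omega) hi).2.2 (by omega)).symm
      have hnot : ¬ (G.dist (q 1) (q (n - 1)) ≤ 1) := by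
        rw [dist_le_one hc]
        obtain ⟨e, f⟩ := hq 1 (n - 1) (by omega) (by omega)
        rw [f]
        rintro (h | h)
        · exact e h
        · omega
      have huq : ∀ i < n, u ≠ q i := by
        rintro i hi rfl
        have hi0 : i ≠ 0 := by rintro rfl; exact huv hq0
        have h0 := (dist_le_one hc).1 (hdq 0 (by omega) (Or.inl rfl))
        obtain ⟨e, f⟩ := hq 0 i (by omega) hi
        rcases f.1 (h0.resolve_left e) with h | h
        · have : i = 1 := by omega
          subst this
          apply hnot
          rw [G.dist_comm]
          exact hdq (n - 1) (by omega) (by omega)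
        · have : i = n - 1 := by omega
          subst this
          exact hnot (hdq 1 (by omega) (by omega))
      have hadj : ∀ i < n, (i = 0 ∨ i = 1 ∨ i + 1 = n) → G.Adj u (q i) := fun i hi hi' =>
        (((dist_le_one hc).1 (hdq i hi hi')).resolve_left (fun h => huq i hi h.symm)).symm
      refine hwheel n hn (wheel_of hn hq u ?_)
      intro k hk
      by_contra hcon
      have hk0 : k ≠ 0 := by rintro rfl; exact hcon (hadj 0 hk (by omega))
      obtain ⟨m, q', hm, hq', hmem⟩ := gap hq u huq (hadj 1 (by omega) (by omega))
        (hadj (n - 1) (by omega) (by omega)) k (by omega) hk hcon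
      refine IH m q' hm ?_ hq'
      intro i hi
      rcases hmem i hi with h | ⟨j, hj1, hj, h⟩
      · rw [h]; exact Finset.mem_erase.2 ⟨huv, hu⟩
      · rw [h]; refine Finset.mem_erase.2 ⟨?_, hqA j hj⟩
        rw [← hq0]; exact (hq 0 j (by omega) hj).1.symm
    · exact IH n p hn (fun i hi => Finset.mem_erase.2 ⟨fun h => hvp ⟨i, hi, h⟩, hp i hi⟩) hcyc

/-- A Helly graph with no induced wheel `W_k`, `k ≥ 4`, is chordal. -/
theorem chordal_of_helly_no_induced_wheel
    {V : Type*} [Fintype V] (G : SimpleGraph V) (hconn : G.Connected)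
    (hHelly : HellyGraph G)
    (hwheel : ∀ k, 4 ≤ k → ¬ HasInducedWheel G k) :
    Chordal G := by
  rintro n hn ⟨f, hinj, hf⟩
  refine main_aux G hconn hwheel _ Finset.univ rfl ?_ ?_ n
    (fun i => if h : i < n then f ⟨i, h⟩ else f ⟨0, by omega⟩) hn (by simp) ?_
  · intro x _ y _ hxy
    obtain ⟨w, hw⟩ := hconn.exists_walk_length_eq_dist y x
    cases w with
    | nil => exact absurd rfl hxy
    | @cons _ z _ hadj t =>
      refine ⟨z, Finset.mem_univ _, hadj.symm, ?_⟩
      have h1 := SimpleGraph.dist_le t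
      have h2 := hconn.dist_triangle (u := x) (v := z) (w := y)
      have h3 : G.dist z y = 1 := SimpleGraph.dist_eq_one_iff_adj.2 hadj.symm
      rw [SimpleGraph.Walk.length_cons] at hw
      rw [G.dist_comm (u := y)] at hw
      rw [G.dist_comm (u := z) (v := x)] at h1
      omega
  · intro S r _ h
    obtain ⟨c, hc⟩ := hHelly S r (fun a ha b hb => by
      obtain ⟨w, _, hw⟩ := h a ha b hb
      exact ⟨w, hw⟩)
    exact ⟨c, Finset.mem_univ _, hc⟩
  · intro i j hij hj
    have hi : i < n := by omega
    simp only [hi, hj, dif_pos]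
    refine ⟨fun h => ?_, ?_⟩
    · have := congrArg Fin.val (hinj h)
      simp only at this
      omega
    · rw [← hf]; exact cyc_adj hn ⟨i, hi⟩ ⟨j, hj⟩ hij
end

section
/- Let G be a chordal graph and let H be a Helly graph such that G is an isometric subgraph of H and every peripheral vertex of H belongs to V(G). Then H is chordal. -/
open SimpleGraph

/-- The metric interval `I_H(x,y)`: vertices on shortest `(x,y)`-paths. -/
def interval {V : Type*} (H : SimpleGraph V) (x y : V) : Set V :=
  {v | H.dist x v + H.dist v y = H.dist x y}

/-- A vertex `x` of `H` is peripheral if there is a vertex `y` such that for every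
vertex `z ≠ x`, the interval `I_H(y,x)` is not a proper subset of `I_H(y,z)`. -/
def Peripheral {V : Type*} (H : SimpleGraph V) (x : V) : Prop :=
  ∃ y : V, ∀ z : V, z ≠ x → ¬ interval H y x ⊂ interval H y z

namespace ChordalHost

/-- The spanning subgraph of `G` keeping the edges inside `S`. -/
def restr {W : Type*} (G : SimpleGraph W) (S : Set W) : SimpleGraph W where
  Adj x y := G.Adj x y ∧ x ∈ S ∧ y ∈ S
  symm := ⟨fun _ _ h => ⟨h.1.symm, h.2.2, h.2.1⟩⟩
  loopless := ⟨fun _ h => G.loopless.irrefl _ h.1⟩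

theorem walk_restr {W : Type*} (G : SimpleGraph W) (S : Set W) {u v : W} (p : G.Walk u v)
    (h : ∀ x ∈ p.support, x ∈ S) : (restr G S).Reachable u v := by
  induction p with
  | nil => exact Reachable.refl _
  | @cons a b c hab p ih =>
    have h1 : (restr G S).Adj a b :=
      ⟨hab, h a (by simp), h b (by simp)⟩
    exact h1.reachable.trans (ih (fun x hx => h x (by simp [hx])))

/-- Geodesics as functions. -/
theorem geod {W : Type*} (G : SimpleGraph W) {p q : W} (h : G.Reachable p q) :
    ∃ (n : ℕ) (f : ℕ → W), f 0 = p ∧ f n = q ∧ (∀ i, i < n → G.Adj (f i) (f (i+1))) ∧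
      (∀ i j, i < j → j ≤ n → f i ≠ f j) ∧
      (∀ i j, i < j → j ≤ n → G.Adj (f i) (f j) → j = i + 1) := by
  obtain ⟨w, hw⟩ := h.exists_walk_length_eq_dist
  have key : ∀ i j, i < j → j ≤ w.length → ∀ r : G.Walk (w.getVert i) (w.getVert j),
      j - i ≤ r.length := by
    intro i j hij hj r
    have := G.dist_le (((w.take i).append r).append (w.drop j))
    simp only [Walk.length_append, Walk.take_length, Walk.drop_length] at this
    omega
  refine ⟨w.length, w.getVert, by simp, by simp, fun i hi => w.adj_getVert_succ hi, ?_, ?_⟩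
  · intro i j hij hj he
    have := key i j hij hj (Walk.nil.copy rfl he)
    simp at this
    omega
  · intro i j hij hj ha
    have := key i j hij hj ha.toWalk
    simp at this
    omega

/-- In a chordal graph, two neighbours of `a` joined by a path avoiding `N[a]` are adjacent. -/
theorem adj_of_link {W : Type*} (G : SimpleGraph W) (hG : Chordal G) (a p q : W)
    (hp : G.Adj a p) (hq : G.Adj a q) (hpq : p ≠ q)
    (h : (restr G ({x | x ≠ a ∧ ¬ G.Adj a x} ∪ {p, q})).Reachable p q) : G.Adj p q := by
  by_contra hna
  obtain ⟨n, f, h0, hn, hadj, hne, hind⟩ := geod _ h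
  have hn2 : 2 ≤ n := by
    rcases Nat.lt_or_ge n 2 with h2 | h2
    · exfalso
      interval_cases n
      · exact hpq (h0.symm.trans hn)
      · have := (hadj 0 (by omega)).1
        simp only [zero_add] at this
        rw [h0, hn] at this
        exact hna this
    · exact h2
  have hmem : ∀ i, i ≤ n → f i ∈ ({x | x ≠ a ∧ ¬ G.Adj a x} ∪ {p, q} : Set W) := by
    intro i hi
    rcases Nat.lt_or_ge i n with h2 | h2
    · exact (hadj i h2).2.1
    · have : i = n := by omega
      subst this
      rw [hn]; simp
  have hfa : ∀ i, i ≤ n → f i ≠ a := by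
    intro i hi he
    rcases hmem i hi with h1 | h1 | h1
    · exact h1.1 he
    · rw [he] at h1; exact G.ne_of_adj hp h1
    · rw [he] at h1; exact G.ne_of_adj hq h1
  have hA : ∀ i, i ≤ n → (G.Adj a (f i) ↔ i = 0 ∨ i = n) := by
    intro i hi
    constructor
    · intro hai
      by_contra hc
      push Not at hc
      rcases hmem i hi with h1 | h1 | h1
      · exact h1.2 hai
      · exact hne 0 i (by omega) hi (h0.trans h1.symm)
      · exact hne i n (by omega) le_rfl ((show f i = q from h1).trans hn.symm)
    · rintro (rfl | rfl)
      · rw [h0]; exact hp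
      · rw [hn]; exact hq
  have hF : ∀ i j, i < j → j ≤ n → (G.Adj (f i) (f j) ↔ j = i + 1) := by
    intro i j hij hj
    constructor
    · intro h1
      exact hind i j hij hj ⟨h1, hmem i (by omega), hmem j hj⟩
    · rintro rfl
      exact (hadj i (by omega)).1
  -- the induced cycle
  let g : ℕ → W := fun i => if i = 0 then a else f (i - 1)
  have hg0 : g 0 = a := rfl
  have hgs : ∀ i, g (i+1) = f i := fun i => rfl
  have hgadj : ∀ i j, i < j → j ≤ n + 1 →
      (G.Adj (g i) (g j) ↔ j = i + 1 ∨ (i = 0 ∧ j = n + 1)) := by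
    intro i j hij hj
    obtain ⟨j, rfl⟩ : ∃ k, j = k + 1 := ⟨j - 1, by omega⟩
    rcases i with _ | i
    · rw [hg0, hgs, hA j (by omega)]; omega
    · rw [hgs, hgs, hF i j (by omega) (by omega)]; omega
  have hgne : ∀ i j, i < j → j ≤ n + 1 → g i ≠ g j := by
    intro i j hij hj
    obtain ⟨j, rfl⟩ : ∃ k, j = k + 1 := ⟨j - 1, by omega⟩
    rcases i with _ | i
    · rw [hg0, hgs]; exact (hfa j (by omega)).symm
    · rw [hgs, hgs]; exact hne i j (by omega) (by omega)
  refine hG (n + 2) (by omega) ⟨fun i => g i.val, ?_, ?_⟩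
  · intro i j hij
    by_contra hc
    have hc' : i.val ≠ j.val := fun h => hc (Fin.ext h)
    have hi := i.isLt
    have hj := j.isLt
    rcases Nat.lt_or_gt_of_ne hc' with h1 | h1
    · exact hgne _ _ h1 (by omega) hij
    · exact hgne _ _ h1 (by omega) hij.symm
  · have main : ∀ i j : Fin (n + 2), i.val < j.val →
        ((cycleGraph (n + 2)).Adj i j ↔ G.Adj (g i.val) (g j.val)) := by
      intro i j hij
      have hi := i.isLt
      have hj := j.isLt
      rw [hgadj _ _ hij (by omega), cycleGraph_adj', Fin.sub_def, Fin.sub_def]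
      simp only
      have e1 : (n + 2 - j.val + i.val) % (n + 2) = n + 2 - j.val + i.val :=
        Nat.mod_eq_of_lt (by omega)
      have e2 : (n + 2 - i.val + j.val) % (n + 2) = j.val - i.val := by
        rw [show n + 2 - i.val + j.val = (j.val - i.val) + (n + 2) by omega, Nat.add_mod_right]
        exact Nat.mod_eq_of_lt (by omega)
      rw [e1, e2]
      omega
    intro i j
    rcases Nat.lt_trichotomy i.val j.val with h1 | h1 | h1
    · exact main i j h1
    · have : i = j := Fin.ext h1
      subst this
      simp
    · rw [SimpleGraph.adj_comm, main j i h1, SimpleGraph.adj_comm]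

/-- `v` is simplicial in `U`. -/
def Simp {W : Type*} (G : SimpleGraph W) (U : Finset W) (v : W) : Prop :=
  v ∈ U ∧ ∀ x ∈ U, ∀ y ∈ U, G.Adj v x → G.Adj v y → x ≠ y → G.Adj x y

open Classical in
theorem dirac {W : Type*} (G : SimpleGraph W) (hG : Chordal G) :
    ∀ (N : ℕ) (U : Finset W), U.card ≤ N → ∀ a ∈ U, ∀ b ∈ U, b ≠ a → ¬ G.Adj a b →
      ∃ v, Simp G U v ∧ v ≠ a ∧ ¬ G.Adj a v := by
  intro N
  induction N with
  | zero =>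
    intro U hU a ha
    simp at hU; subst hU; simp at ha
  | succ N ih =>
    intro U hU a ha b hb hba hab
    -- component of `b` outside `N[a]`
    let X : Set W := {x | x ∈ U ∧ x ≠ a ∧ ¬ G.Adj a x}
    let C : Finset W := U.filter (fun x => (restr G X).Reachable b x)
    let S : Finset W := U.filter (fun x => G.Adj a x ∧ ∃ c ∈ C, G.Adj c x)
    have hbX : b ∈ X := ⟨hb, hba, hab⟩
    have hCX : ∀ c ∈ C, c ∈ X := by
      intro c hc
      have hr : (restr G X).Reachable b c := (Finset.mem_filter.1 hc).2
      obtain ⟨w⟩ := hr.symm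
      cases w with
      | nil => exact hbX
      | cons h _ => exact h.2.1
    have hCN : ∀ c ∈ C, ∀ x ∈ U, G.Adj c x → x ∈ C ∪ S := by
      intro c hc x hx hcx
      by_cases hax : G.Adj a x
      · exact Finset.mem_union_right _ (Finset.mem_filter.2 ⟨hx, hax, c, hc, hcx⟩)
      · refine Finset.mem_union_left _ (Finset.mem_filter.2 ⟨hx, ?_⟩)
        have hxa : x ≠ a := by
          rintro rfl
          exact (hCX c hc).2.2 hcx.symm
        have : (restr G X).Adj c x := ⟨hcx, hCX c hc, hx, hxa, hax⟩
        exact (Finset.mem_filter.1 hc).2.trans this.reachable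
    have hSclq : ∀ p ∈ S, ∀ q ∈ S, p ≠ q → G.Adj p q := by
      intro p hp q hq hpq
      obtain ⟨_, hap, c, hc, hcp⟩ := Finset.mem_filter.1 hp
      obtain ⟨_, haq, d, hd, hdq⟩ := Finset.mem_filter.1 hq
      refine adj_of_link G hG a p q hap haq hpq ?_
      have hle : restr G X ≤ restr G ({x | x ≠ a ∧ ¬ G.Adj a x} ∪ {p, q}) := by
        intro x y hxy
        exact ⟨hxy.1, Or.inl hxy.2.1.2, Or.inl hxy.2.2.2⟩
      have h1 : (restr G X).Reachable c d :=
        (Finset.mem_filter.1 hc).2.symm.trans (Finset.mem_filter.1 hd).2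
      have h2 : (restr G ({x | x ≠ a ∧ ¬ G.Adj a x} ∪ {p, q})).Adj p c :=
        ⟨hcp.symm, Or.inr (by simp), Or.inl (hCX c hc).2⟩
      have h3 : (restr G ({x | x ≠ a ∧ ¬ G.Adj a x} ∪ {p, q})).Adj d q :=
        ⟨hdq, Or.inl (hCX d hd).2, Or.inr (by simp)⟩
      exact (h2.reachable.trans (h1.mono hle)).trans h3.reachable
    have hbC : b ∈ C := Finset.mem_filter.2 ⟨hb, Reachable.refl _⟩
    have hsubU : C ∪ S ⊆ U := by
      intro x hx
      rcases Finset.mem_union.1 hx with h | h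
      · exact (Finset.mem_filter.1 h).1
      · exact (Finset.mem_filter.1 h).1
    have hanot : a ∉ C ∪ S := by
      intro h
      rcases Finset.mem_union.1 h with h | h
      · exact (hCX a h).2.1 rfl
      · exact G.loopless.irrefl a (Finset.mem_filter.1 h).2.1
    have hcard : (C ∪ S).card ≤ N := by
      have : (C ∪ S).card < U.card :=
        Finset.card_lt_card ⟨hsubU, fun h => hanot (h ha)⟩
      omega
    -- it suffices to find a vertex of C simplicial in C ∪ S
    suffices hs : ∃ v ∈ C, Simp G (C ∪ S) v by
      obtain ⟨v, hv, hsv⟩ := hs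
      refine ⟨v, ⟨(hCX v hv).1, ?_⟩, (hCX v hv).2.1, (hCX v hv).2.2⟩
      intro x hx y hy hvx hvy hxy
      exact hsv.2 x (hCN v hv x hx hvx) y (hCN v hv y hy hvy) hvx hvy hxy
    by_cases hS : ∃ s ∈ S, ∃ x ∈ C ∪ S, x ≠ s ∧ ¬ G.Adj s x
    · obtain ⟨s, hs, x, hx, hxs, hsx⟩ := hS
      obtain ⟨v, hv, hvs, hsv⟩ := ih (C ∪ S) hcard s (Finset.mem_union_right _ hs) x hx hxs hsx
      refine ⟨v, ?_, hv⟩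
      rcases Finset.mem_union.1 hv.1 with h | h
      · exact h
      · exact absurd (hSclq s hs v h hvs.symm) hsv
    · push Not at hS
      by_cases hc : ∃ c ∈ C, ∃ x ∈ C ∪ S, x ≠ c ∧ ¬ G.Adj c x
      · obtain ⟨c, hc, x, hx, hxc, hcx⟩ := hc
        obtain ⟨v, hv, hvc, hcv⟩ := ih (C ∪ S) hcard c (Finset.mem_union_left _ hc) x hx hxc hcx
        refine ⟨v, ?_, hv⟩
        rcases Finset.mem_union.1 hv.1 with h | h
        · exact h
        · exact absurd (hS v h c (Finset.mem_union_left _ hc) hvc.symm).symm hcv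
      · push Not at hc
        refine ⟨b, hbC, Finset.mem_union_left _ hbC, ?_⟩
        intro x hx y hy _ _ hxy
        rcases Finset.mem_union.1 hx with h | h
        · exact hc x h y hy hxy.symm
        · exact hS x h y hy hxy.symm

theorem exists_simp {W : Type*} (G : SimpleGraph W) (hG : Chordal G) (U : Finset W)
    (hU : U.Nonempty) : ∃ v, Simp G U v := by
  by_cases h : ∃ a ∈ U, ∃ b ∈ U, b ≠ a ∧ ¬ G.Adj a b
  · obtain ⟨a, ha, b, hb, hba, hab⟩ := h
    obtain ⟨v, hv, _⟩ := dirac G hG _ U le_rfl a ha b hb hba hab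
    exact ⟨v, hv⟩
  · push Not at h
    obtain ⟨v, hv⟩ := hU
    exact ⟨v, hv, fun x hx y hy _ _ hxy => h x hx y hy hxy.symm⟩

open Classical in
/-- Perfect elimination ordering. -/
theorem exists_peo {W : Type*} (G : SimpleGraph W) (hG : Chordal G) :
    ∀ (N : ℕ) (U : Finset W), U.card = N → ∃ ρ : W → ℕ,
      (∀ x ∈ U, ∀ y ∈ U, ρ x = ρ y → x = y) ∧
      ∀ v ∈ U, ∀ x ∈ U, ∀ y ∈ U, G.Adj v x → G.Adj v y → ρ v < ρ x → ρ v < ρ y → x ≠ y →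
        G.Adj x y := by
  intro N
  induction N with
  | zero =>
    intro U hU
    simp at hU; subst hU
    exact ⟨fun _ => 0, by simp, by simp⟩
  | succ N ih =>
    intro U hU
    obtain ⟨v, hv⟩ := exists_simp G hG U (Finset.card_pos.1 (by omega))
    obtain ⟨ρ, h1, h2⟩ := ih (U.erase v) (by rw [Finset.card_erase_of_mem hv.1]; omega)
    refine ⟨fun x => if x = v then 0 else ρ x + 1, ?_, ?_⟩
    · intro x hx y hy hxy
      by_cases hxv : x = v <;> by_cases hyv : y = v
      · rw [hxv, hyv]
      · simp [hxv, hyv] at hxy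
      · simp [hxv, hyv] at hxy
      · simp [hxv, hyv] at hxy
        exact h1 x (by simp [hxv, hx]) y (by simp [hyv, hy]) hxy
    · intro u hu x hx y hy hux huy hlx hly hxy
      by_cases huv : u = v
      · subst huv
        exact hv.2 x hx y hy hux huy hxy
      · have hxv : x ≠ v := by rintro rfl; simp at hlx
        have hyv : y ≠ v := by rintro rfl; simp at hly
        simp only [huv, hxv, hyv, if_false] at hlx hly
        exact h2 u (by simp [huv, hu]) x (by simp [hxv, hx]) y (by simp [hyv, hy]) hux huy
          (by omega) (by omega) hxy

/-- In a connected set, a non-maximal vertex has a later neighbour in the set. -/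
theorem later_nbr {W : Type*} (G : SimpleGraph W) (ρ : W → ℕ) (hinj : Function.Injective ρ)
    (hpeo : ∀ v x y, G.Adj v x → G.Adj v y → ρ v < ρ x → ρ v < ρ y → x ≠ y → G.Adj x y)
    (S : Set W) (w z : W) (hlt : ρ w < ρ z) (hr : (restr G S).Reachable w z) :
    ∃ k ∈ S, G.Adj w k ∧ ρ w < ρ k := by
  obtain ⟨n, f, h0, hn, hadj, hne, hind⟩ := geod _ hr
  obtain ⟨i, hi, hmin⟩ := Finset.exists_min_image (Finset.range (n + 1)) (fun i => ρ (f i))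
    ⟨0, by simp⟩
  simp only [Finset.mem_range] at hi hmin
  have hlt' : ∀ j, j ≤ n → j ≠ i → ρ (f i) < ρ (f j) := by
    intro j hj hji
    refine lt_of_le_of_ne (hmin j (by omega)) ?_
    intro he
    have := hinj he
    rcases Nat.lt_or_gt_of_ne hji with h1 | h1
    · exact hne j i h1 (by omega) this.symm
    · exact hne i j h1 (by omega) this
  have hnpos : n ≠ 0 := by
    rintro rfl
    rw [← h0, ← hn] at hlt
    exact lt_irrefl _ hlt
  have hin : i ≠ n := by
    rintro rfl
    have := hmin 0 (by omega)
    rw [h0, hn] at this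
    omega
  have hi0 : i = 0 := by
    by_contra hi0
    obtain ⟨i, rfl⟩ : ∃ k, i = k + 1 := ⟨i - 1, by omega⟩
    have a1 := hadj i (by omega)
    have a2 := hadj (i + 1) (by omega)
    have := hpeo _ _ _ a1.1.symm a2.1 (hlt' i (by omega) (by omega))
      (hlt' (i + 2) (by omega) (by omega)) (hne i (i + 2) (by omega) (by omega))
    have := hind i (i + 2) (by omega) (by omega) ⟨this, a1.2.1, a2.2.2⟩
    omega
  subst hi0
  have a1 := hadj 0 (by omega)
  have := hlt' (0 + 1) (by omega) (by omega)
  rw [h0] at a1 this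
  exact ⟨f (0 + 1), a1.2.2, a1.1, this⟩

theorem mem_support_split {W : Type*} (G : SimpleGraph W) {u v x : W} (p : G.Walk u v)
    (hx : x ∈ p.support) : G.dist u x + G.dist v x ≤ p.length := by
  classical
  have h1 := G.dist_le (p.takeUntil x hx)
  have h2 := G.dist_le (p.dropUntil x hx)
  have h3 := congrArg Walk.length (p.take_spec hx)
  rw [Walk.length_append] at h3
  rw [G.dist_comm] at h2
  omega

theorem disks_reach {W : Type*} (G : SimpleGraph W) (hc : G.Connected) (u v : W) (a b : ℕ)
    (hd : G.dist u v ≤ a + b + 1) (x y : W) (hx : G.dist u x ≤ a) (hy : G.dist v y ≤ b) :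
    (restr G ({t | G.dist u t ≤ a} ∪ {t | G.dist v t ≤ b})).Reachable x y := by
  obtain ⟨p, hp⟩ := hc.exists_walk_length_eq_dist u x
  obtain ⟨q, hq⟩ := hc.exists_walk_length_eq_dist u v
  obtain ⟨r, hr⟩ := hc.exists_walk_length_eq_dist v y
  have h1 := walk_restr G ({t | G.dist u t ≤ a} ∪ {t | G.dist v t ≤ b}) p (by
    intro t ht
    have := mem_support_split G p ht
    left
    simp only [Set.mem_ofPred_eq]
    omega)
  have h2 := walk_restr G ({t | G.dist u t ≤ a} ∪ {t | G.dist v t ≤ b}) q (by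
    intro t ht
    have := mem_support_split G q ht
    simp only [Set.mem_union, Set.mem_ofPred_eq]
    omega)
  have h3 := walk_restr G ({t | G.dist u t ≤ a} ∪ {t | G.dist v t ≤ b}) r (by
    intro t ht
    have := mem_support_split G r ht
    right
    simp only [Set.mem_ofPred_eq]
    omega)
  exact (h1.symm.trans h2).trans h3

/-- Every shortest path extends to a peripheral vertex. -/
theorem extend {V : Type*} [Finite V] (H : SimpleGraph V) (x y : V) :
    ∃ z, Peripheral H z ∧ H.dist x y + H.dist y z = H.dist x z := by
  obtain ⟨z, hz, hmax⟩ := Set.Finite.exists_maximalFor (fun z => interval H x z)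
    {z | interval H x y ⊆ interval H x z} (Set.toFinite _) ⟨y, Set.Subset.refl (interval H x y)⟩
  refine ⟨z, ⟨x, ?_⟩, ?_⟩
  · intro z' _ hss
    exact hss.2 (hmax (j := z') (Set.Subset.trans hz hss.1) hss.1)
  · exact hz (show H.dist x y + H.dist y y = H.dist x y by simp)

end ChordalHost

open ChordalHost

/-- If `G` is chordal and `H` is a Helly graph containing `G` as an isometric subgraph in
which all peripheral vertices are real (e.g. `H = 𝓗(G)`), then `H` is chordal. -/
theorem chordal_host_of_chordal
    {V : Type*} [Fintype V] (H : SimpleGraph V) (s : Set V) (G : SimpleGraph s)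
    (hGconn : G.Connected) (hHconn : H.Connected)
    (hsub : ∀ a b : s, G.Adj a b → H.Adj a b)
    (hiso : ∀ a b : s, G.dist a b = H.dist a b)
    (hperi : ∀ v : V, Peripheral H v → v ∈ s)
    (hHelly : HellyGraph H)
    (hchordal : Chordal G) :
    Chordal H := by
  classical
  obtain ⟨ρ, hinj', hpeo'⟩ := exists_peo G hchordal _ (Finset.univ : Finset s) rfl
  have hinj : Function.Injective ρ :=
    fun x y h => hinj' x (Finset.mem_univ _) y (Finset.mem_univ _) h
  have hpeo : ∀ v x y, G.Adj v x → G.Adj v y → ρ v < ρ x → ρ v < ρ y → x ≠ y → G.Adj x y :=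
    fun v x y => hpeo' v (Finset.mem_univ _) x (Finset.mem_univ _) y (Finset.mem_univ _)
  -- latest vertex of each disk
  have hM : ∀ (u : s) (r : ℕ), ∃ m : s, G.dist u m ≤ r ∧ ∀ t : s, G.dist u t ≤ r → ρ t ≤ ρ m := by
    intro u r
    obtain ⟨m, hm, hmax⟩ := Finset.exists_max_image
      (Finset.univ.filter (fun t : s => G.dist u t ≤ r)) ρ ⟨u, by simp⟩
    simp only [Finset.mem_filter, Finset.mem_univ, true_and] at hm hmax
    exact ⟨m, hm, hmax⟩
  choose M hM1 hM2 using hM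
  haveI : Nonempty s := hGconn.nonempty
  have hT : ∀ x : V, ∃ u : s, ∀ v : s,
      ρ (M u (H.dist x u)) ≤ ρ (M v (H.dist x v)) := by
    intro x
    obtain ⟨u, _, hu⟩ := Finset.exists_min_image (Finset.univ : Finset s)
      (fun u => ρ (M u (H.dist x u))) Finset.univ_nonempty
    exact ⟨u, fun v => hu v (Finset.mem_univ _)⟩
  choose U hU using hT
  let top : V → s := fun x => M (U x) (H.dist x (U x))
  -- the clique attached to the deeper top meets all the disks of the neighbour
  have claimA : ∀ x y : V, H.Adj x y → ρ (top x) ≤ ρ (top y) → ∀ v : s,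
      ∃ k : s, (k = top x ∨ (G.Adj (top x) k ∧ ρ (top x) < ρ k)) ∧ G.dist v k ≤ H.dist y v := by
    intro x y hxy hle v
    have hd1 : H.dist x y = 1 := dist_eq_one_iff_adj.2 hxy
    have hle2 : ρ (top x) ≤ ρ (M v (H.dist y v)) := hle.trans (hU y v)
    rcases hle2.eq_or_lt with he | hlt
    · refine ⟨top x, Or.inl rfl, ?_⟩
      rw [hinj he]
      exact hM1 v _
    · have hd : G.dist (U x) v ≤ H.dist x (U x) + H.dist y v + 1 := by
        rw [hiso]
        have t1 := hHconn.dist_triangle (u := (U x : V)) (v := x) (w := (v : V))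
        have t2 := hHconn.dist_triangle (u := x) (v := y) (w := (v : V))
        rw [H.dist_comm (u := (U x : V)) (v := x)] at t1
        omega
      obtain ⟨k, hk, hadj, hlk⟩ := later_nbr G ρ hinj hpeo _ (top x) _ hlt
        (disks_reach G hGconn (U x) v _ _ hd (top x) _ (hM1 _ _) (hM1 v _))
      refine ⟨k, Or.inr ⟨hadj, hlk⟩, ?_⟩
      rcases hk with h | h
      · have := hM2 _ _ k h
        exact absurd hlk (not_lt.2 this)
      · exact h
  have claimB : ∀ x y z : V, H.Adj x y → H.Adj x z → ρ (top x) ≤ ρ (top y) →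
      ρ (top x) ≤ ρ (top z) → H.dist y z ≤ 1 := by
    intro x y z hxy hxz hy hz
    by_contra hc
    obtain ⟨z', hz', e1⟩ := extend H y z
    obtain ⟨y', hy', e2⟩ := extend H z' y
    obtain ⟨k, hk, hkd⟩ := claimA x y hxy hy ⟨y', hperi _ hy'⟩
    obtain ⟨l, hl, hld⟩ := claimA x z hxz hz ⟨z', hperi _ hz'⟩
    have hkl : H.dist (k : V) l ≤ 1 := by
      by_cases hkl : k = l
      · subst hkl; simp
      · have : G.Adj k l := by
          rcases hk with rfl | ⟨hk1, hk2⟩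
          · rcases hl with rfl | ⟨hl1, hl2⟩
            · exact absurd rfl hkl
            · exact hl1
          · rcases hl with rfl | ⟨hl1, hl2⟩
            · exact hk1.symm
            · exact hpeo _ _ _ hk1 hl1 hk2 hl2 hkl
        exact (dist_eq_one_iff_adj.2 (hsub _ _ this)).le
    rw [hiso] at hkd hld
    simp only at hkd hld
    have t1 := hHconn.dist_triangle (u := z') (v := (l : V)) (w := y')
    have t2 := hHconn.dist_triangle (u := (l : V)) (v := (k : V)) (w := y')
    rw [H.dist_comm (u := (l : V)) (v := (k : V))] at t2
    rw [H.dist_comm (u := (k : V)) (v := y')] at t2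
    rw [H.dist_comm (u := z') (v := y)] at e2
    omega
  intro n hn
  rintro ⟨f, hf, hadj⟩
  obtain ⟨n, rfl⟩ : ∃ m, n = m + 4 := ⟨n - 4, by omega⟩
  obtain ⟨i, _, hi⟩ := Finset.exists_min_image (Finset.univ : Finset (Fin (n + 4)))
    (fun i => ρ (top (f i))) Finset.univ_nonempty
  have c1 : (cycleGraph (n + 4)).Adj i (i + 1) := by
    rw [cycleGraph_adj]; right; abel
  have c2 : (cycleGraph (n + 4)).Adj i (i - 1) := by
    rw [cycleGraph_adj]; left; abel
  have hle := claimB (f i) (f (i + 1)) (f (i - 1)) ((hadj _ _).1 c1) ((hadj _ _).1 c2)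
    (hi _ (Finset.mem_univ _)) (hi _ (Finset.mem_univ _))
  have v1 : ((1 : Fin (n + 4)) : ℕ) = 1 := by simp
  have v2 : ((1 + 1 : Fin (n + 4)) : ℕ) = 2 := by
    rw [Fin.val_add, v1]; exact Nat.mod_eq_of_lt (by omega)
  have v3 : ((1 + 1 + 1 : Fin (n + 4)) : ℕ) = 3 := by
    rw [Fin.val_add, v1, v2]; exact Nat.mod_eq_of_lt (by omega)
  have hne : i + 1 ≠ i - 1 := by
    intro h
    have h2 : (1 + 1 : Fin (n + 4)) = 0 := by
      have : (1 + 1 : Fin (n + 4)) = (i + 1) - (i - 1) := by abel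
      rw [this, h, sub_self]
    rw [h2] at v2
    simp at v2
  have hH : H.dist (f (i + 1)) (f (i - 1)) = 1 := by
    have := hHconn.pos_dist_of_ne (hf.ne hne)
    omega
  have := (hadj _ _).2 (dist_eq_one_iff_adj.1 hH)
  rw [cycleGraph_adj] at this
  rcases this with h | h
  · have h2 : (1 + 1 : Fin (n + 4)) = 1 := by
      have : (1 + 1 : Fin (n + 4)) = (i + 1) - (i - 1) := by abel
      exact this.trans h
    rw [h2, v1] at v2
    omega
  · have h2 : (1 + 1 + 1 : Fin (n + 4)) = 0 := by
      have : (1 + 1 + 1 : Fin (n + 4)) = 1 - ((i - 1) - (i + 1)) := by abel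
      rw [this, h, sub_self]
    rw [h2] at v3
    simp at v3
end

section
/- A distance-hereditary graph G is Helly if and only if for every induced 4-cycle of G on vertices w, x, y, z, the extended square S(w,x,y,z) is suspended. -/
open SimpleGraph

/-- A graph is distance-hereditary if every connected induced subgraph is isometric. -/
def DistanceHereditary {V : Type*} (G : SimpleGraph V) : Prop :=
  ∀ s : Set V, (G.induce s).Connected →
    ∀ a b : s, (G.induce s).dist a b = G.dist (a : V) (b : V)

/-- The vertices `w, x, y, z` induce a 4-cycle in `G` (edges `wx, xy, yz, zw`,
non-edges `wy, xz`). -/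
def IsInducedC4 {V : Type*} (G : SimpleGraph V) (w x y z : V) : Prop :=
  G.Adj w x ∧ G.Adj x y ∧ G.Adj y z ∧ G.Adj z w ∧
    w ≠ y ∧ x ≠ z ∧ ¬ G.Adj w y ∧ ¬ G.Adj x z

/-- `v` belongs to the closed neighborhood of `a`. -/
def InClosedNbhd {V : Type*} (G : SimpleGraph V) (v a : V) : Prop :=
  v = a ∨ G.Adj v a

/-- The extended square `S(w,x,y,z)`: all vertices whose closed neighborhood contains at
least three of the four vertices `w, x, y, z`. -/
def ExtendedSquare {V : Type*} (G : SimpleGraph V) (w x y z : V) : Set V :=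
  {v | (InClosedNbhd G v w ∧ InClosedNbhd G v x ∧ InClosedNbhd G v y) ∨
       (InClosedNbhd G v w ∧ InClosedNbhd G v x ∧ InClosedNbhd G v z) ∨
       (InClosedNbhd G v w ∧ InClosedNbhd G v y ∧ InClosedNbhd G v z) ∨
       (InClosedNbhd G v x ∧ InClosedNbhd G v y ∧ InClosedNbhd G v z)}

/-- A set `M` is suspended if some vertex `c` is adjacent to every vertex of `M \ {c}`. -/
def Suspended {V : Type*} (G : SimpleGraph V) (M : Set V) : Prop :=
  ∃ c : V, ∀ v ∈ M, v ≠ c → G.Adj c v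


/-- Attaching a vertex `y` whose only neighbour on a walk is the starting point `x`. -/
lemma dh_pendant {V : Type*} {G : SimpleGraph V} (hDH : DistanceHereditary G)
    {x c y : V} (W : G.Walk x c) (hyx : G.Adj y x) (hyc : y ≠ c)
    (hW : ∀ t ∈ W.support, G.Adj y t → t = x) : G.dist x c + 1 ≤ G.dist y c := by
  classical
  have hcon := (Walk.cons hyx W).connected_induce_support
  have hy : y ∈ {v | v ∈ (Walk.cons hyx W).support} := Walk.start_mem_support _
  have hx : x ∈ {v | v ∈ (Walk.cons hyx W).support} := by simp
  have hc : c ∈ {v | v ∈ (Walk.cons hyx W).support} := Walk.end_mem_support _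
  have h1 := hDH _ hcon ⟨y, hy⟩ ⟨c, hc⟩
  have h2 := hDH _ hcon ⟨x, hx⟩ ⟨c, hc⟩
  obtain ⟨w, hw⟩ := hcon.exists_walk_length_eq_dist ⟨y, hy⟩ ⟨c, hc⟩
  simp only at h1 h2
  rw [← h1, ← h2, ← hw]
  cases w with
  | nil => exact absurd rfl hyc
  | @cons _ t _ h w' =>
    obtain ⟨t, ht⟩ := t
    have hadj : G.Adj y t := h
    have ht' : t ∈ (Walk.cons hyx W).support := ht
    rw [Walk.support_cons, List.mem_cons] at ht'
    have : t = x := by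
      rcases ht' with rfl | h'
      · exact absurd hadj (G.loopless.irrefl _)
      · exact hW t h' hadj
    subst this
    rw [Walk.length_cons]
    have := dist_le w'
    omega

lemma adj_dist_le {V : Type*} {G : SimpleGraph V} (hconn : G.Connected) {a b : V}
    (h : G.Adj a b) (c : V) : G.dist a c ≤ G.dist b c + 1 := by
  have h1 := hconn.dist_triangle (u := a) (v := b) (w := c)
  have h2 := dist_eq_one_iff_adj.mpr h
  omega

lemma geodesic_mem {V : Type*} {G : SimpleGraph V} (hconn : G.Connected) (z c : V) :
    ∃ W : G.Walk z c, ∀ t ∈ W.support, t = z ∨ G.dist t c < G.dist z c := by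
  classical
  obtain ⟨W, hW⟩ := hconn.exists_walk_length_eq_dist z c
  refine ⟨W, fun t ht => ?_⟩
  by_cases h : t = z
  · exact Or.inl h
  right
  have h1 := congrArg Walk.length (W.take_spec ht)
  rw [Walk.length_append] at h1
  have h2 := dist_le (W.takeUntil t ht)
  have h3 := dist_le (W.dropUntil t ht)
  have h4 := hconn.pos_dist_of_ne (Ne.symm h)
  omega

/-- Adjacent vertices at the same distance from `c` have the same parents. -/
lemma dh_same {V : Type*} {G : SimpleGraph V} (hconn : G.Connected)
    (hDH : DistanceHereditary G) {c x y z : V} (hxy : G.Adj x y)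
    (hd : G.dist x c = G.dist y c) (hzx : G.Adj z x) (hz : G.dist z c + 1 = G.dist x c) :
    G.Adj z y := by
  by_contra hn
  obtain ⟨W, hW⟩ := geodesic_mem hconn z c
  have hyc : y ≠ c := by
    rintro rfl
    rw [SimpleGraph.dist_self] at hd
    omega
  have := dh_pendant hDH (Walk.cons hzx.symm W) hxy.symm hyc (by
    intro t ht hyt
    rw [Walk.support_cons, List.mem_cons] at ht
    rcases ht with h | h
    · exact h
    · exfalso
      rcases hW t h with rfl | h'
      · exact hn hyt.symm
      · have := adj_dist_le hconn hyt c
        omega)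
  omega

/-- Vertices at the same distance from `c` with a common child have the same parents. -/
lemma dh_child {V : Type*} {G : SimpleGraph V} (hconn : G.Connected)
    (hDH : DistanceHereditary G) {c u x y z : V} (hux : G.Adj u x) (huy : G.Adj u y)
    (hu : G.dist u c = G.dist x c + 1)
    (hd : G.dist x c = G.dist y c) (hzx : G.Adj z x) (hz : G.dist z c + 1 = G.dist x c) :
    G.Adj z y := by
  by_contra hn
  by_cases hxy : G.Adj x y
  · exact hn (dh_same hconn hDH hxy hd hzx hz)
  obtain ⟨W, hW⟩ := geodesic_mem hconn z c
  have hyc : y ≠ c := by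
    rintro rfl
    rw [SimpleGraph.dist_self] at hd
    omega
  have := dh_pendant hDH (Walk.cons hux (Walk.cons hzx.symm W)) huy.symm hyc (by
    intro t ht hyt
    rw [Walk.support_cons, List.mem_cons, Walk.support_cons, List.mem_cons] at ht
    rcases ht with h | h | h
    · exact h
    · subst h
      exact absurd hyt.symm hxy
    · exfalso
      rcases hW t h with rfl | h'
      · exact hn hyt.symm
      · have := adj_dist_le hconn hyt c
        omega)
  omega

lemma exists_parent {V : Type*} {G : SimpleGraph V} (hconn : G.Connected) {v c : V}
    (h : 0 < G.dist v c) : ∃ z, G.Adj z v ∧ G.dist z c + 1 = G.dist v c := by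
  obtain ⟨W, hW⟩ := hconn.exists_walk_length_eq_dist v c
  cases W with
  | nil => simp at h
  | @cons _ t _ hvt W' =>
    refine ⟨t, hvt.symm, ?_⟩
    rw [Walk.length_cons] at hW
    have h1 := dist_le W'
    have h2 := adj_dist_le hconn hvt c
    omega

lemma dh_cross_aux {V : Type*} {G : SimpleGraph V} (hconn : G.Connected)
    (hDH : DistanceHereditary G) {c w p q : V} (hcp : G.Adj c p) (hcq : G.Adj c q)
    (hq : G.dist q w + 1 = G.dist c w) (hp : G.dist c w ≤ G.dist p w) (m : ℕ) :
    ∀ v, G.dist v c = m + 1 → G.dist v p = m → m < G.dist v q →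
      G.dist v w = m + G.dist p w ∧
      ∃ z, G.Adj z v ∧ G.dist z w + 1 = G.dist v w ∧ G.dist z c ≤ m + 1 := by
  have hpc := adj_dist_le hconn hcp.symm w
  have hcq1 : G.dist q c = 1 := dist_eq_one_iff_adj.mpr hcq.symm
  have hpq : G.dist p w = G.dist c w → G.Adj q p := fun h =>
    dh_same hconn hDH hcp h.symm hcq.symm hq
  induction m using Nat.strong_induction_on with
  | _ m ih =>
  intro v hvc hvp hvq
  match m, ih, hvc, hvp, hvq with
  | 0, ih, hvc, hvp, hvq =>
    have : v = p := hconn.dist_eq_zero_iff.mp hvp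
    subst this
    refine ⟨by omega, ?_⟩
    rcases Nat.eq_or_lt_of_le hp with h | h
    · exact ⟨q, hpq h.symm, by omega, by omega⟩
    · refine ⟨c, hcp, by omega, ?_⟩
      rw [SimpleGraph.dist_self]; omega
  | 1, ih, hvc, hvp, hvq =>
    have hvp' : G.Adj v p := dist_eq_one_iff_adj.mp hvp
    have hnc : ¬ G.Adj c v := fun h => by
      have := dist_eq_one_iff_adj.mpr h.symm
      omega
    have hnq : ¬ G.Adj q v := fun h => by
      have := dist_eq_one_iff_adj.mpr h.symm
      omega
    have h1 := adj_dist_le hconn hvp' w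
    have h2 := adj_dist_le hconn hvp'.symm w
    have key : G.dist v w = 1 + G.dist p w := by
      rcases Nat.eq_or_lt_of_le hp with h | h
      · have hqp := hpq h.symm
        rcases Nat.lt_trichotomy (G.dist v w) (G.dist p w) with h3 | h3 | h3
        · exfalso
          by_cases hq0 : G.dist q w = 0
          · have e1 := hconn.dist_eq_zero_iff.mp hq0
            have e2 := hconn.dist_eq_zero_iff.mp (show G.dist v w = 0 by omega)
            rw [e1, e2, SimpleGraph.dist_self] at hvq
            omega
          · obtain ⟨b, hbq, hb⟩ := exists_parent hconn (Nat.pos_of_ne_zero hq0)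
            have hbv : G.Adj b v :=
              dh_child hconn hDH hqp.symm hvp'.symm (by omega) (by omega) hbq hb
            have hbc : G.dist b c = 2 := by
              have t1 := adj_dist_le hconn hbq c
              have t2 := hconn.dist_triangle (u := c) (v := b) (w := w)
              rw [SimpleGraph.dist_comm (u := c) (v := b)] at t2
              omega
            exact hnq (dh_same (c := c) hconn hDH hbv (by omega) hbq.symm (by omega))
        · exact absurd (dh_same hconn hDH hvp'.symm h3.symm hqp (by omega)) hnq
        · omega
      · rcases Nat.lt_trichotomy (G.dist v w) (G.dist p w) with h3 | h3 | h3
        · exact absurd (dh_child hconn hDH hcp.symm hvp'.symm (by omega) (by omega)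
            hcq.symm hq) hnq
        · exact absurd (dh_same hconn hDH hvp'.symm h3.symm hcp (by omega)) hnc
        · omega
    refine ⟨key, p, hvp'.symm, by omega, ?_⟩
    have := dist_eq_one_iff_adj.mpr hcp.symm
    omega
  | m + 2, ih, hvc, hvp, hvq =>
    have hpc1 : G.dist p c = 1 := dist_eq_one_iff_adj.mpr hcp.symm
    obtain ⟨v1, hv1, hd1⟩ := exists_parent hconn (show 0 < G.dist v p by omega)
    obtain ⟨v2, hv2, hd2⟩ := exists_parent hconn (show 0 < G.dist v1 p by omega)
    have a1 := adj_dist_le hconn hv1.symm c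
    have a2 := adj_dist_le hconn hv2.symm c
    have a3 := hconn.dist_triangle (u := v1) (v := p) (w := c)
    have a4 := hconn.dist_triangle (u := v2) (v := p) (w := c)
    have a5 := adj_dist_le hconn hv1.symm q
    have a6 := adj_dist_le hconn hv2.symm q
    obtain ⟨e1, -⟩ := ih (m + 1) (by omega) v1 (by omega) (by omega) (by omega)
    obtain ⟨e2, z, hz, hzw, hzc⟩ := ih m (by omega) v2 (by omega) (by omega) (by omega)
    have h1 := adj_dist_le hconn hv1 w
    have h2 := adj_dist_le hconn hv1.symm w
    have key : G.dist v w = m + 2 + G.dist p w := by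
      rcases Nat.lt_trichotomy (G.dist v w) (G.dist v1 w) with h3 | h3 | h3
      · exfalso
        have := dh_child hconn hDH hv2.symm hv1 (by omega) (by omega) hz hzw
        have := adj_dist_le hconn this.symm c
        omega
      · exfalso
        have := dh_same hconn hDH hv1 h3.symm hv2 (by omega)
        have := adj_dist_le hconn this.symm c
        omega
      · omega
    exact ⟨key, v1, hv1, by omega, by omega⟩

lemma dh_cross {V : Type*} {G : SimpleGraph V} (hconn : G.Connected)
    (hDH : DistanceHereditary G) {c v w p q : V} (hcp : G.Adj c p) (hcq : G.Adj c q)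
    (hq : G.dist q w + 1 = G.dist c w) (hp : G.dist p v + 1 = G.dist c v)
    (hpw : G.dist p w + 1 ≠ G.dist c w) (hqv : G.dist q v + 1 ≠ G.dist c v) :
    G.dist c v + G.dist c w ≤ G.dist v w + 1 ∧
    (¬ G.Adj p q → G.dist c v + G.dist c w ≤ G.dist v w) := by
  have h1 := adj_dist_le hconn hcp w
  have h2 := adj_dist_le hconn hcq v
  obtain ⟨e, -⟩ := dh_cross_aux hconn hDH hcp hcq hq (by omega) (G.dist p v) v
    (by rw [SimpleGraph.dist_comm, hp]) (by rw [SimpleGraph.dist_comm]) (by rw [SimpleGraph.dist_comm (u := v)]; omega)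
  refine ⟨by omega, fun hn => ?_⟩
  by_contra hlt
  have : G.dist c w = G.dist p w := by omega
  exact hn (dh_same hconn hDH hcp this hcq.symm hq).symm

/-- The common neighbourhood of two vertices at distance two has a universal vertex. -/
lemma exists_universal {V : Type*} [Fintype V] {G : SimpleGraph V}
    (hS : ∀ w x y z : V, IsInducedC4 G w x y z → Suspended G (ExtendedSquare G w x y z))
    {a c : V} (hac : a ≠ c) (hnac : ¬ G.Adj a c) (P : Finset V)
    (hP : ∀ t, t ∈ P ↔ G.Adj c t ∧ G.Adj a t) (hne : P.Nonempty) :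
    ∃ e ∈ P, ∀ q ∈ P, q ≠ e → G.Adj e q := by
  classical
  obtain ⟨e, he, hmax⟩ := P.exists_max_image
    (fun e => (P.filter (fun t => t = e ∨ G.Adj e t)).card) hne
  refine ⟨e, he, fun q hq hqe => ?_⟩
  by_contra hn
  obtain ⟨hce, hae⟩ := (hP e).mp he
  obtain ⟨hcq, haq⟩ := (hP q).mp hq
  obtain ⟨f, hf⟩ := hS c e a q ⟨hce, hae.symm, haq, hcq.symm, hac.symm, hqe.symm,
    fun h => hnac h.symm, hn⟩
  have m1 : c ∈ ExtendedSquare G c e a q :=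
    Or.inr (Or.inl ⟨Or.inl rfl, Or.inr hce, Or.inr hcq⟩)
  have m2 : a ∈ ExtendedSquare G c e a q :=
    Or.inr (Or.inr (Or.inr ⟨Or.inr hae, Or.inl rfl, Or.inr haq⟩))
  have m3 : e ∈ ExtendedSquare G c e a q :=
    Or.inl ⟨Or.inr hce.symm, Or.inl rfl, Or.inr hae.symm⟩
  have m4 : q ∈ ExtendedSquare G c e a q :=
    Or.inr (Or.inr (Or.inl ⟨Or.inr hcq.symm, Or.inr haq.symm, Or.inl rfl⟩))
  have n1 : c ≠ f := by
    rintro rfl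
    exact hnac (hf a m2 hac).symm
  have n2 : a ≠ f := by
    rintro rfl
    exact hnac (hf c m1 hac.symm)
  have n3 : e ≠ f := by
    rintro rfl
    exact hn (hf q m4 hqe)
  have n4 : q ≠ f := by
    rintro rfl
    exact hn (hf e m3 (Ne.symm hqe)).symm
  have hfP : f ∈ P := (hP f).mpr ⟨(hf c m1 n1).symm, (hf a m2 n2).symm⟩
  have hlt : (P.filter (fun t => t = e ∨ G.Adj e t)).card <
      (P.filter (fun t => t = f ∨ G.Adj f t)).card := by
    apply Finset.card_lt_card
    rw [Finset.ssubset_iff_of_subset]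
    · refine ⟨q, Finset.mem_filter.mpr ⟨hq, Or.inr (hf q m4 n4)⟩, ?_⟩
      rw [Finset.mem_filter]
      rintro ⟨-, h | h⟩
      · exact hqe h
      · exact hn h
    · intro t ht
      obtain ⟨htP, hte⟩ := Finset.mem_filter.mp ht
      refine Finset.mem_filter.mpr ⟨htP, ?_⟩
      by_cases htf : t = f
      · exact Or.inl htf
      obtain ⟨hct, hat⟩ := (hP t).mp htP
      refine Or.inr (hf t (Or.inl ⟨Or.inr hct.symm, ?_, Or.inr hat.symm⟩) htf)
      exact hte.imp id fun h => h.symm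
  exact absurd (hmax f hfP) (not_le.mpr hlt)

/-- One shrinking step. -/
lemma helly_step {V : Type*} [Fintype V] {G : SimpleGraph V} (hconn : G.Connected)
    (hDH : DistanceHereditary G)
    (hS : ∀ w x y z : V, IsInducedC4 G w x y z → Suspended G (ExtendedSquare G w x y z))
    (S : Set V) (r : V → ℕ) (hpair : ∀ u ∈ S, ∀ v ∈ S, G.dist u v ≤ r u + r v)
    (c : V) (hc : ∀ v ∈ S, G.dist c v ≤ r v + 1) : ∃ e, ∀ v ∈ S, G.dist e v ≤ r v := by
  classical
  by_cases h0 : ∃ v ∈ S, r v = 0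
  · obtain ⟨v, hv, hv0⟩ := h0
    exact ⟨v, fun u hu => by have := hpair v hv u hu; omega⟩
  push Not at h0
  let P : V → Finset V := fun v =>
    Finset.univ.filter (fun u => G.Adj c u ∧ G.dist u v + 1 = G.dist c v)
  have hP : ∀ v u, u ∈ P v ↔ G.Adj c u ∧ G.dist u v + 1 = G.dist c v := by
    intro v u
    simp [P]
  let B : Finset V := Finset.univ.filter (fun v => v ∈ S ∧ G.dist c v = r v + 1)
  have hB : ∀ v, v ∈ B ↔ v ∈ S ∧ G.dist c v = r v + 1 := by
    intro v
    simp [B]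
  by_cases hBe : B.Nonempty
  swap
  · refine ⟨c, fun v hv => ?_⟩
    by_contra hlt
    exact hBe ⟨v, (hB v).mpr ⟨hv, by have := hc v hv; omega⟩⟩
  obtain ⟨b, hb, hmin⟩ := B.exists_min_image (fun v => (P v).card) hBe
  obtain ⟨hbS, hbd⟩ := (hB b).mp hb
  have hsub : ∀ v ∈ B, P b ⊆ P v := by
    intro v hv p hp
    by_contra hpv
    obtain ⟨hvS, hvd⟩ := (hB v).mp hv
    have : ∃ q ∈ P v, q ∉ P b := by
      by_contra hno
      push Not at hno
      have : P v ⊂ P b := (Finset.ssubset_iff_of_subset hno).mpr ⟨p, hp, hpv⟩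
      exact absurd (hmin v hv) (not_le.mpr (Finset.card_lt_card this))
    obtain ⟨q, hq, hqb⟩ := this
    rw [hP] at hp hpv hq hqb
    have := (dh_cross hconn hDH hp.1 hq.1 hq.2 hp.2 (fun h => hpv ⟨hp.1, h⟩)
      (fun h => hqb ⟨hq.1, h⟩)).1
    have := hpair b hbS v hvS
    omega
  have hrb := h0 b hbS
  obtain ⟨p0, hp0, hp0d⟩ := exists_parent hconn (show 0 < G.dist c b by omega)
  obtain ⟨a, ha, had⟩ := exists_parent hconn (show 0 < G.dist p0 b by omega)
  have hPa : ∀ t, t ∈ P b ↔ G.Adj c t ∧ G.Adj a t := by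
    intro t
    rw [hP]
    constructor
    · rintro ⟨h1, h2⟩
      exact ⟨h1, dh_child hconn hDH hp0.symm h1 (by omega) (by omega) ha had⟩
    · rintro ⟨h1, h2⟩
      have t1 := adj_dist_le hconn h1 b
      have t2 := adj_dist_le hconn h2.symm b
      exact ⟨h1, by omega⟩
  obtain ⟨e, he, hu⟩ := exists_universal (a := a) (c := c) hS (by rintro rfl; omega)
    (fun h => by have := adj_dist_le hconn h.symm b; omega) (P b) hPa
    ⟨p0, (hP b p0).mpr ⟨hp0.symm, hp0d⟩⟩
  refine ⟨e, fun v hv => ?_⟩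
  have heb := (hP b e).mp he
  by_contra hlt
  have hec := adj_dist_le hconn heb.1.symm v
  have hcv := hc v hv
  by_cases hbad : v ∈ B
  · have h1 := (hP v e).mp (hsub v hbad he)
    have h2 := (hB v).mp hbad
    omega
  have hcv' : G.dist c v = r v := by
    have : G.dist c v ≠ r v + 1 := fun h => hbad ((hB v).mpr ⟨hv, h⟩)
    omega
  have hrv := h0 v hv
  obtain ⟨q, hq, hqd⟩ := exists_parent hconn (show 0 < G.dist c v by omega)
  have hneq : ¬ G.Adj e q := fun h => by
    have := adj_dist_le hconn h v
    omega
  by_cases hqb : q ∈ P b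
  · refine hneq (hu q hqb ?_)
    rintro rfl
    omega
  · have := (dh_cross hconn hDH heb.1 hq.symm hqd heb.2 (by omega)
      (fun h => hqb ((hP b q).mpr ⟨hq.symm, h⟩))).2 hneq
    have := hpair b hbS v hv
    omega

/-- A distance-hereditary graph is Helly iff the extended square of every induced 4-cycle
is suspended. -/
theorem distanceHereditary_helly_iff_extendedSquares_suspended
    {V : Type*} [Fintype V] (G : SimpleGraph V) (hconn : G.Connected)
    (hDH : DistanceHereditary G) :
    HellyGraph G ↔
      ∀ w x y z : V, IsInducedC4 G w x y z → Suspended G (ExtendedSquare G w x y z) := by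

  constructor
  · intro hH w x y z hsq
    obtain ⟨h1, h2, h3, h4, -⟩ := hsq
    have hle : ∀ u t, InClosedNbhd G u t → G.dist u t ≤ 1 := by
      rintro u t (rfl | h)
      · simp
      · exact (dist_eq_one_iff_adj.mpr h).le
    obtain ⟨c, hc⟩ := hH (ExtendedSquare G w x y z) (fun _ => 1) (by
      intro u hu v hv
      have : ∃ t, InClosedNbhd G u t ∧ InClosedNbhd G v t := by
        simp only [ExtendedSquare, Set.mem_setOf_eq] at hu hv
        rcases hu with ⟨a1, a2, a3⟩ | ⟨a1, a2, a3⟩ | ⟨a1, a2, a3⟩ | ⟨a1, a2, a3⟩ <;>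
        rcases hv with ⟨b1, b2, b3⟩ | ⟨b1, b2, b3⟩ | ⟨b1, b2, b3⟩ | ⟨b1, b2, b3⟩ <;>
        first
          | exact ⟨w, by assumption, by assumption⟩
          | exact ⟨x, by assumption, by assumption⟩
          | exact ⟨y, by assumption, by assumption⟩
      obtain ⟨t, ht1, ht2⟩ := this
      exact ⟨t, hle u t ht1, hle v t ht2⟩)
    refine ⟨c, fun v hv hvc => ?_⟩
    have h5 := hc v hv
    have h6 := hconn.pos_dist_of_ne hvc
    exact (dist_eq_one_iff_adj.mp (le_antisymm h5 h6)).symm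
  · intro hS S r hpair
    have hpair' : ∀ u ∈ S, ∀ v ∈ S, G.dist u v ≤ r u + r v := by
      intro u hu v hv
      obtain ⟨t, h1, h2⟩ := hpair u hu v hv
      have := hconn.dist_triangle (u := u) (v := t) (w := v)
      rw [SimpleGraph.dist_comm (u := t)] at this
      omega
    have main : ∀ K : ℕ, (∃ c, ∀ v ∈ S, G.dist c v ≤ r v + K) →
        ∃ c, ∀ v ∈ S, G.dist c v ≤ r v := by
      intro K
      induction K with
      | zero => exact id
      | succ K ih =>
        rintro ⟨c, hc⟩
        refine ih (helly_step hconn hDH hS S (fun v => r v + K) ?_ c hc)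
        intro u hu v hv
        have := hpair' u hu v hv
        show G.dist u v ≤ (r u + K) + (r v + K)
        omega
    obtain ⟨c0⟩ := hconn.nonempty
    obtain ⟨c, hc⟩ := main (∑ v, G.dist c0 v) ⟨c0, fun v _ => by
      have := Finset.single_le_sum (f := fun v => G.dist c0 v) (fun _ _ => Nat.zero_le _)
        (Finset.mem_univ v)
      omega⟩
    exact ⟨c, fun v hv => by rw [SimpleGraph.dist_comm]; exact hc v hv⟩
end

section
/- For every distance-hereditary graph G there exists a distance-hereditary Helly graph H such that G is an isometric subgraph of H, H has at most 2·|V(G)| vertices, and H has at most 4·|E(G)| edges. -/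
open SimpleGraph

/-- every walk's support contains a geodesic -/
def DHw {V : Type*} (G : SimpleGraph V) : Prop :=
  ∀ ⦃a b : V⦄ (p : G.Walk a b), ∃ q : G.Walk a b, q.support ⊆ p.support ∧ q.length ≤ G.dist a b

theorem push_walk {V V' : Type*} {K : SimpleGraph V'} {H : SimpleGraph V} (f : V' → V)
    (hf : ∀ x y, K.Adj x y → H.Adj (f x) (f y) ∨ f x = f y) {x y : V'} (p : K.Walk x y) :
    ∃ q : H.Walk (f x) (f y), q.length ≤ p.length ∧ ∀ w ∈ q.support, ∃ t ∈ p.support, f t = w := by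
  induction p with
  | nil => exact ⟨.nil, by simp, by simp⟩
  | @cons a b c h p ih =>
    obtain ⟨q, hq, hs⟩ := ih
    rcases hf _ _ h with h1 | h1
    · refine ⟨.cons h1 q, by simpa using hq, ?_⟩
      intro w hw
      rw [Walk.support_cons, List.mem_cons] at hw
      rcases hw with rfl | hw
      · exact ⟨a, by simp, rfl⟩
      · obtain ⟨t, ht, e⟩ := hs w hw
        exact ⟨t, by simp [ht], e⟩
    · refine ⟨q.copy h1.symm rfl, by simp; omega, ?_⟩
      intro w hw
      rw [Walk.support_copy] at hw
      obtain ⟨t, ht, e⟩ := hs w hw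
      exact ⟨t, by simp [ht], e⟩

theorem push_dist {V V' : Type*} {K : SimpleGraph V'} {H : SimpleGraph V} (f : V' → V)
    (hf : ∀ x y, K.Adj x y → H.Adj (f x) (f y) ∨ f x = f y) {x y : V'} (h : K.Reachable x y) :
    H.dist (f x) (f y) ≤ K.dist x y := by
  obtain ⟨p, hp⟩ := h.exists_walk_length_eq_dist
  obtain ⟨q, hq, -⟩ := push_walk f hf p
  exact (dist_le q).trans (hq.trans hp.le)

theorem lift_walk {V V' : Type*} {K : SimpleGraph V'} {H : SimpleGraph V} (f : V' → V)
    (hf : ∀ x y, H.Adj (f x) (f y) → K.Adj x y) (T : V' → Prop) {a b : V} (q : H.Walk a b) :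
    (∀ w ∈ q.support, ∃ t, T t ∧ f t = w) → a ≠ b → ∀ x y, f x = a → f y = b → T x → T y →
    ∃ p : K.Walk x y, p.length ≤ q.length ∧ ∀ w ∈ p.support, T w := by
  induction q with
  | nil => intro _ h; exact absurd rfl h
  | @cons a b c h q ih =>
    intro hs hac x y hx hy Tx Ty
    by_cases hbc : b = c
    · subst hbc
      refine ⟨.cons (hf _ _ (by rw [hx, hy]; exact h)) .nil, by simp, ?_⟩
      simp [Tx, Ty]
    · obtain ⟨t, Tt, rfl⟩ := hs b (by simp)
      obtain ⟨p, hp, hps⟩ := ih (fun w hw => hs w (by simp [hw])) hbc t y rfl hy Tt Ty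
      refine ⟨.cons (hf _ _ (by rw [hx]; exact h)) p, by simp [hp], ?_⟩
      intro w hw
      rw [Walk.support_cons, List.mem_cons] at hw
      rcases hw with rfl | hw
      · exact Tx
      · exact hps w hw

theorem DHw_of_fibre {V V' : Type*} {K : SimpleGraph V'} {H : SimpleGraph V} (f : V' → V)
    (hf : ∀ x y, K.Adj x y → H.Adj (f x) (f y) ∨ f x = f y)
    (hf' : ∀ x y, H.Adj (f x) (f y) → K.Adj x y)
    (hfib : ∀ x y w, f x = f y → x ≠ y → K.Adj x w → f x = f w → w = y)
    (hH : DHw H) : DHw K := by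
  intro x y p
  by_cases hxy : f x = f y
  · by_cases h : x = y
    · subst h
      exact ⟨.nil, by simp, by simp⟩
    by_cases hadj : K.Adj x y
    · refine ⟨.cons hadj .nil, ?_, ?_⟩
      · simp
      · have := p.reachable.pos_dist_of_ne h
        simp; omega
    · have h2 := p.reachable.one_lt_dist_of_ne_of_not_adj h hadj
      cases p with
      | nil => exact absurd rfl h
      | @cons _ w _ hw p =>
        have hwy : K.Adj w y := by
          rcases hf _ _ hw with h3 | h3
          · exact hf' _ _ (hxy ▸ h3.symm)
          · exact absurd (hfib x y w hxy h hw h3 ▸ hw) hadj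
        refine ⟨.cons hw (.cons hwy .nil), ?_, by simp; omega⟩
        intro z hz
        simp only [Walk.support_cons, Walk.support_nil, List.mem_cons, List.not_mem_nil, or_false] at hz ⊢
        rcases hz with rfl | rfl | rfl <;> simp
  · obtain ⟨q, -, hs⟩ := push_walk f hf p
    obtain ⟨q2, hs2, hl2⟩ := hH q
    obtain ⟨p2, hl3, hs3⟩ := lift_walk f hf' (· ∈ p.support) q2 (fun w hw => hs w (hs2 hw)) hxy
      x y rfl rfl (by simp) (by simp)
    exact ⟨p2, hs3, hl3.trans (hl2.trans (push_dist f hf p.reachable))⟩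

theorem induce_push {V : Type*} {G : SimpleGraph V} {s : Set V} (x y : s) (h : (G.induce s).Adj x y) :
   G.Adj (x : V) y ∨ (x : V) = y := Or.inl (by simpa using h)

theorem DHw.of_DH {V : Type*} {G : SimpleGraph V} (h : DistanceHereditary G) : DHw G := by
  intro a b p
  have hc := p.connected_induce_support
  have := h _ hc ⟨a, by simp⟩ ⟨b, by simp⟩
  obtain ⟨q, hq⟩ := hc.exists_walk_length_eq_dist ⟨a, by simp⟩ ⟨b, by simp⟩
  obtain ⟨q2, hl, hs⟩ := push_walk (H := G) Subtype.val induce_push q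
  refine ⟨q2, ?_, ?_⟩
  · intro w hw
    obtain ⟨z, -, rfl⟩ := hs w hw
    exact z.2
  · exact hl.trans (hq.trans this).le

theorem DHw.induce {V : Type*} {G : SimpleGraph V} (h : DHw G) (s : Set V) : DHw (G.induce s) := by
  refine DHw_of_fibre (H := G) Subtype.val induce_push (fun x y h => by simpa using h) ?_ h
  intro x y w h1 h2
  exact absurd (Subtype.ext h1) h2

/-- induced embeddings of connected graphs into DH graphs are isometric -/
theorem DHw.isometric {V W : Type*} {G : SimpleGraph V} {H : SimpleGraph W} (h : DHw H)
    (hG : G.Connected) (φ : V → W) (hinj : Function.Injective φ)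
    (hφ : ∀ a b, G.Adj a b ↔ H.Adj (φ a) (φ b)) (a b : V) : G.dist a b = H.dist (φ a) (φ b) := by
  apply le_antisymm
  · obtain ⟨p⟩ := hG.preconnected a b
    obtain ⟨q, -, hs⟩ := push_walk (H := H) φ (fun x y h => Or.inl ((hφ x y).1 h)) p
    obtain ⟨q2, hs2, hl2⟩ := h q
    by_cases hab : a = b
    · subst hab; simp
    obtain ⟨p2, hl3, -⟩ := lift_walk φ (fun x y h => (hφ x y).2 h) (fun _ => True) q2
      (fun w hw => by obtain ⟨t, -, ht⟩ := hs w (hs2 hw); exact ⟨t, trivial, ht⟩)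
      (fun e => hab (hinj e)) a b rfl rfl trivial trivial
    exact (dist_le p2).trans (hl3.trans hl2)
  · exact push_dist φ (fun x y h => Or.inl ((hφ x y).1 h)) (hG.preconnected a b)

theorem DHw.toDH {V : Type*} {G : SimpleGraph V} (h : DHw G) : DistanceHereditary G := by
  intro s hs a b
  exact h.isometric hs Subtype.val Subtype.val_injective (fun a b => by simp) a b

/-! ### One-vertex extensions -/

/-- add a vertex `none` with neighbourhood `N` -/
def ext {W : Type*} (H : SimpleGraph W) (N : Set W) : SimpleGraph (Option W) where
  Adj x y := match x, y with
    | none, none => False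
    | none, some b => b ∈ N
    | some a, none => a ∈ N
    | some a, some b => H.Adj a b
  symm := ⟨by
    intro x y h
    rcases x with _ | x <;> rcases y with _ | y <;> first | exact h | exact H.adj_symm h⟩
  loopless := ⟨by
    intro x h
    rcases x with _ | x
    · exact h
    · exact H.loopless.irrefl x h⟩

section ext
variable {W : Type*} (H : SimpleGraph W) (N : Set W)
@[simp] theorem ext_nn : (ext H N).Adj none none ↔ False := Iff.rfl
@[simp] theorem ext_ns (b : W) : (ext H N).Adj none (some b) ↔ b ∈ N := Iff.rfl
@[simp] theorem ext_sn (b : W) : (ext H N).Adj (some b) none ↔ b ∈ N := Iff.rfl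
@[simp] theorem ext_ss (a b : W) : (ext H N).Adj (some a) (some b) ↔ H.Adj a b := Iff.rfl
end ext

theorem ext_push {W : Type*} {H : SimpleGraph W} {N : Set W} {z : W}
    (hz : ∀ x ∈ N, x = z ∨ H.Adj z x) (x y : Option W) (h : (ext H N).Adj x y) :
    H.Adj (x.getD z) (y.getD z) ∨ x.getD z = y.getD z := by
  rcases x with _ | x <;> rcases y with _ | y <;> simp at h ⊢
  · rcases hz _ h with h | h
    · exact Or.inr h.symm
    · exact Or.inl h
  · rcases hz _ h with h | h
    · exact Or.inr h
    · exact Or.inl h.symm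
  · simp [h]

theorem ext_connected {W : Type*} {H : SimpleGraph W} {N : Set W} (hH : H.Connected)
    (hN : N.Nonempty) : (ext H N).Connected := by
  have h1 : ∀ a b : W, (ext H N).Reachable (some a) (some b) := fun a b => by
    obtain ⟨p⟩ := hH.preconnected a b
    obtain ⟨q, -⟩ := push_walk (H := ext H N) some (fun x y h => Or.inl (by simpa using h)) p
    exact ⟨q⟩
  obtain ⟨c, hc⟩ := hN
  have h2 : ∀ x, (ext H N).Reachable (some c) x := by
    rintro (_ | x)
    · exact Adj.reachable (by simpa using hc)
    · exact h1 _ _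
  refine { preconnected := fun x y => (h2 x).symm.trans (h2 y), nonempty := ⟨none⟩ }

theorem ext_pendant_DHw {W : Type*} {H : SimpleGraph W} (u : W) (hH : DHw H) :
    DHw (ext H {u}) := by
  have hpush := ext_push (H := H) (N := {u}) (z := u) (by simp)
  have key : ∀ {x y} (p : (ext H {u}).Walk x y), none ∈ p.support → x ≠ none →
      some u ∈ p.support := by
    intro x y p
    induction p with
    | nil => intro h h'; simp at h; exact absurd h.symm h'
    | @cons a b c h p ih =>
      intro h1 h2
      rw [Walk.support_cons, List.mem_cons] at h1 ⊢
      rcases h1 with h1 | h1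
      · exact absurd h1.symm h2
      · rcases b with _ | b
        · rcases a with _ | a
          · exact absurd rfl h2
          · left; simp at h; simp [h]
        · right; exact ih h1 (by simp)
  have hss : ∀ (a b : W) (p : (ext H {u}).Walk (some a) (some b)),
      ∃ q : (ext H {u}).Walk (some a) (some b), q.support ⊆ p.support ∧ q.length ≤ H.dist a b := by
    intro a b p
    obtain ⟨q, -, hs⟩ := push_walk _ hpush p
    obtain ⟨q2, hs2, hl2⟩ := hH q
    obtain ⟨q3, hl3, hs3⟩ := push_walk (H := ext H {u}) some (fun x y h => Or.inl (by simpa using h)) q2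
    refine ⟨q3, ?_, hl3.trans hl2⟩
    intro w hw
    obtain ⟨t, ht, rfl⟩ := hs3 w hw
    obtain ⟨t', ht', e⟩ := hs t (hs2 ht)
    rcases t' with _ | t'
    · simp at e; subst e; exact key p ht' (by simp)
    · simp at e; subst e; exact ht'
  have hns : ∀ (b : W) (p : (ext H {u}).Walk none (some b)),
      ∃ q : (ext H {u}).Walk none (some b), q.support ⊆ p.support ∧
        q.length ≤ (ext H {u}).dist none (some b) := by
    intro b p
    obtain ⟨g, hg⟩ := p.reachable.exists_walk_length_eq_dist
    have h1 : H.dist u b + 1 ≤ g.length := by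
      cases g with
      | @cons _ w _ h g =>
        rcases w with _ | w
        · simp at h
        · have : w = u := by simpa using h
          subst this
          obtain ⟨q, hq, -⟩ := push_walk _ hpush g
          have := dist_le q
          simp at this ⊢
          omega
    cases p with
    | @cons _ w _ h p =>
      rcases w with _ | w
      · simp at h
      · have : w = u := by simpa using h
        subst this
        obtain ⟨q, hq, hl⟩ := hss _ _ p
        refine ⟨.cons h q, ?_, ?_⟩
        · intro z hz
          rw [Walk.support_cons, List.mem_cons] at hz ⊢
          exact hz.imp_right (fun h => hq h)
        · rw [Walk.length_cons]; omega
  intro x y p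
  rcases x with _ | a <;> rcases y with _ | b
  · exact ⟨.nil, by simp, by simp⟩
  · exact hns b p
  · obtain ⟨q, hq, hl⟩ := hns a p.reverse
    refine ⟨q.reverse, ?_, ?_⟩
    · intro z hz
      have := hq (by simpa using hz : z ∈ q.support)
      simpa using this
    · rw [Walk.length_reverse, dist_comm]; exact hl
  · obtain ⟨q, hq, hl⟩ := hss a b p
    refine ⟨q, hq, hl.trans ?_⟩
    exact push_dist _ hpush p.reachable

theorem ext_true_DHw {W : Type*} {H : SimpleGraph W} (u : W) (hH : DHw H) :
    DHw (ext H (insert u (H.neighborSet u))) := by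
  refine DHw_of_fibre (H := H) (fun x => x.getD u) (ext_push (by simp)) ?_ ?_ hH
  · intro x y h
    rcases x with _ | x <;> rcases y with _ | y <;> simp at h ⊢
    · exact Or.inr h
    · exact Or.inr h.symm
    · exact h
  · intro x y w
    rcases x with _ | x <;> rcases y with _ | y <;> rcases w with _ | w <;> simp <;> grind [SimpleGraph.irrefl]

theorem ext_false_DHw {W : Type*} {H : SimpleGraph W} (u : W) (hH : DHw H) :
    DHw (ext H (H.neighborSet u)) := by
  refine DHw_of_fibre (H := H) (fun x => x.getD u) (ext_push (by simp +contextual)) ?_ ?_ hH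
  · intro x y h
    rcases x with _ | x <;> rcases y with _ | y <;> simp at h ⊢
    · exact h
    · exact h.symm
    · exact h
  · intro x y w
    rcases x with _ | x <;> rcases y with _ | y <;> rcases w with _ | w <;> simp <;> grind [SimpleGraph.irrefl]

/-- a set that behaves like a disk with respect to the Helly property -/
def HellySet {W : Type*} (H : SimpleGraph W) (N : Set W) : Prop :=
  ∀ (S : Set W) (r : W → ℕ),
    (∀ u ∈ S, ∀ v ∈ S, ∃ w, H.dist u w ≤ r u ∧ H.dist v w ≤ r v) →
    (∀ u ∈ S, ∃ w ∈ N, H.dist u w ≤ r u) →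
    ∃ c ∈ N, ∀ v ∈ S, H.dist v c ≤ r v

/-- `x` is dominated by another vertex -/
def Dominated {W : Type*} (H : SimpleGraph W) (x : W) : Prop :=
  ∃ z, H.Adj x z ∧ ∀ w, H.Adj x w → w = z ∨ H.Adj z w

theorem hellySet_disk {W : Type*} {H : SimpleGraph W} (hH : HellyGraph H) (u : W) (m : ℕ) :
    HellySet H {a | H.dist u a ≤ m} := by
  classical
  intro S r h1 h2
  obtain ⟨c, hc⟩ := hH (insert u S)
      (fun x => if x = u then (if u ∈ S then min (r u) m else m) else r x) (by
    have key : ∀ v ∈ S, ∃ w, H.dist u w ≤ (if u ∈ S then min (r u) m else m) ∧ H.dist v w ≤ r v := by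
      intro v hv
      split_ifs with hu
      · rcases le_total (r u) m with h | h
        · rw [min_eq_left h]; exact h1 u hu v hv
        · rw [min_eq_right h]; exact h2 v hv
      · exact h2 v hv
    intro x hx y hy
    by_cases hxu : x = u
    · subst hxu
      by_cases hyu : y = x
      · subst hyu; exact ⟨y, by simp⟩
      · simp only [if_pos, if_neg hyu]
        exact key y (hy.resolve_left hyu)
    · by_cases hyu : y = u
      · subst hyu
        simp only [if_pos, if_neg hxu]
        obtain ⟨w, hw⟩ := key x (hx.resolve_left hxu)
        exact ⟨w, hw.2, hw.1⟩
      · simp only [if_neg hxu, if_neg hyu]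
        exact h1 x (hx.resolve_left hxu) y (hy.resolve_left hyu))
  have hu := hc u (by simp)
  simp only [if_pos] at hu
  refine ⟨c, ?_, ?_⟩
  · refine le_trans hu ?_
    split_ifs <;> simp
  · intro v hv
    by_cases hvu : v = u
    · subst hvu
      rw [if_pos hv] at hu
      exact hu.trans (min_le_left _ _)
    · have := hc v (by simp [hv])
      simpa only [if_neg hvu] using this

theorem dom_dist {W : Type*} {H : SimpleGraph W} (hc : H.Connected) {u z : W}
    (hz : ∀ w, H.Adj u w → w = z ∨ H.Adj z w) (x : W) (hx : x ≠ u) : H.dist x z ≤ H.dist x u := by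
  obtain ⟨p, hp⟩ := hc.exists_walk_length_eq_dist u x
  rw [dist_comm (u := x) (v := z), dist_comm (u := x) (v := u), ← hp]
  cases p with
  | nil => exact absurd rfl hx
  | @cons _ w _ h p =>
    rcases hz w h with rfl | h'
    · exact (dist_le p).trans (by simp)
    · exact dist_le (.cons h' p)

theorem hellySet_nbr {W : Type*} {H : SimpleGraph W} (hc : H.Connected) (hH : HellyGraph H) (u : W)
    (hd : Dominated H u) : HellySet H (H.neighborSet u) := by
  intro S r h1 h2
  obtain ⟨c, hc1, hc2⟩ := hellySet_disk hH u 1 S r h1 (fun x hx => by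
    obtain ⟨w, hw, h⟩ := h2 x hx
    exact ⟨w, (dist_eq_one_iff_adj.2 hw).le, h⟩)
  by_cases hcu : c = u
  · subst hcu
    obtain ⟨z, hz, hd⟩ := hd
    refine ⟨z, hz, ?_⟩
    intro v hv
    by_cases hvc : v = c
    · subst hvc
      obtain ⟨w, hw, h⟩ := h2 v hv
      rw [dist_eq_one_iff_adj.2 hw] at h
      rwa [dist_eq_one_iff_adj.2 hz]
    · exact (dom_dist hc hd v hvc).trans (hc2 v hv)
  · refine ⟨c, ?_, hc2⟩
    have := hc.pos_dist_of_ne (Ne.symm hcu)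
    exact dist_eq_one_iff_adj.1 (le_antisymm hc1 this)

/-- first step of geodesics out of the new vertex -/
theorem ext_first {W : Type*} {H : SimpleGraph W} {N : Set W} (hH : H.Connected) {z : W} (hzN : z ∈ N)
    (hz : ∀ x ∈ N, x = z ∨ H.Adj z x) (a : W) :
    ∃ x ∈ N, H.dist x a + 1 ≤ (ext H N).dist none (some a) := by
  obtain ⟨p, hp⟩ := (ext_connected hH ⟨z, hzN⟩).exists_walk_length_eq_dist none (some a)
  rw [← hp]
  cases p with
  | @cons _ w _ h p =>
    rcases w with _ | w
    · simp at h
    · refine ⟨w, by simpa using h, ?_⟩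
      obtain ⟨q, hq, -⟩ := push_walk _ (ext_push hz) p
      have := dist_le q
      simp at this ⊢
      omega

theorem ext_dist_some_le {W : Type*} {H : SimpleGraph W} {N : Set W} (hH : H.Connected) (a b : W) :
    (ext H N).dist (some a) (some b) ≤ H.dist a b :=
  push_dist some (fun x y h => Or.inl (by simpa using h)) (hH.preconnected a b)

theorem ext_dist_none_le {W : Type*} {H : SimpleGraph W} {N : Set W} (hH : H.Connected) {x : W}
    (hx : x ∈ N) (b : W) : (ext H N).dist none (some b) ≤ H.dist x b + 1 := by
  have h1 := ext_dist_some_le (N := N) hH x b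
  have h2 : (ext H N).dist none (some x) = 1 := dist_eq_one_iff_adj.2 (by simpa using hx)
  have := (ext_connected (N := N) hH ⟨x, hx⟩).dist_triangle (u := none) (v := some x) (w := some b)
  omega

theorem ext_helly {W : Type*} {H : SimpleGraph W} {N : Set W} (hc : H.Connected) (hH : HellyGraph H)
    {z : W} (hzN : z ∈ N) (hz : ∀ x ∈ N, x = z ∨ H.Adj z x)
    (hB : ∀ R : ℕ, HellySet H {a | ∃ x ∈ N, H.dist x a ≤ R}) : HellyGraph (ext H N) := by
  have hc' := ext_connected (N := N) hc ⟨z, hzN⟩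
  intro S r hS
  have hle : ∀ x y : Option W, H.dist (x.getD z) (y.getD z) ≤ (ext H N).dist x y :=
    fun x y => push_dist _ (ext_push hz) (hc'.preconnected x y)
  have hpair : ∀ u ∈ {a | some a ∈ S}, ∀ v ∈ {a | some a ∈ S},
      ∃ w, H.dist u w ≤ (r ∘ some) u ∧ H.dist v w ≤ (r ∘ some) v := by
    intro u hu v hv
    obtain ⟨w, h1, h2⟩ := hS _ hu _ hv
    exact ⟨w.getD z, (hle (some u) w).trans h1, (hle (some v) w).trans h2⟩
  by_cases hn : none ∈ S
  · by_cases h0 : r none = 0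
    · refine ⟨none, fun v hv => ?_⟩
      obtain ⟨w, h1, h2⟩ := hS none hn v hv
      have : none = w := by
        by_contra hne
        have := hc'.pos_dist_of_ne hne
        omega
      subst this
      exact h2
    · obtain ⟨R, hR⟩ := Nat.exists_eq_succ_of_ne_zero h0
      obtain ⟨c, ⟨x, hx, hxc⟩, hc2⟩ := hB R {a | some a ∈ S} (r ∘ some) hpair (by
        intro a ha
        obtain ⟨w, h1, h2⟩ := hS none hn _ ha
        rcases w with _ | w
        · obtain ⟨x, hx, h3⟩ := ext_first hc hzN hz a
          rw [dist_comm] at h2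
          refine ⟨x, ⟨x, hx, by simp⟩, ?_⟩
          rw [dist_comm]
          simp only [Function.comp]
          omega
        · obtain ⟨x, hx, h3⟩ := ext_first hc hzN hz w
          exact ⟨w, ⟨x, hx, by omega⟩, (hle (some a) (some w)).trans h2⟩)
      refine ⟨some c, ?_⟩
      rintro (_ | v) hv
      · have := ext_dist_none_le hc hx c
        omega
      · exact (ext_dist_some_le hc v c).trans (hc2 v hv)
  · obtain ⟨c, hc2⟩ := hH _ _ hpair
    refine ⟨some c, ?_⟩
    rintro (_ | v) hv
    · exact absurd hv hn
    · exact (ext_dist_some_le hc v c).trans (hc2 v hv)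

theorem ext_pendant_helly {W : Type*} {H : SimpleGraph W} (hc : H.Connected) (hH : HellyGraph H) (u : W) :
    HellyGraph (ext H {u}) := by
  refine ext_helly hc hH (z := u) (by simp) (by simp) ?_
  intro R
  simpa using hellySet_disk hH u R

theorem ext_true_helly {W : Type*} {H : SimpleGraph W} (hc : H.Connected) (hH : HellyGraph H) (u : W) :
    HellyGraph (ext H (insert u (H.neighborSet u))) := by
  refine ext_helly hc hH (z := u) (by simp) (by simp) ?_
  intro R
  convert hellySet_disk hH u (R+1) using 1
  ext a
  constructor
  · rintro ⟨x, hx, h⟩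
    have := hc.dist_triangle (u := u) (v := x) (w := a)
    have h2 : H.dist u x ≤ 1 := by
      rcases hx with rfl | hx
      · simp
      · exact (dist_eq_one_iff_adj.2 hx).le
    show H.dist u a ≤ R + 1
    omega
  · intro (h : H.dist u a ≤ R + 1)
    obtain ⟨p, hp⟩ := hc.exists_walk_length_eq_dist u a
    cases p with
    | nil => exact ⟨u, by simp, by simp⟩
    | @cons _ w _ h' p =>
      refine ⟨w, Or.inr h', ?_⟩
      have := dist_le p
      simp at hp
      omega

theorem ext_false_helly {W : Type*} {H : SimpleGraph W} (hc : H.Connected) (hH : HellyGraph H) (u : W)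
    (hd : Dominated H u) : HellyGraph (ext H (H.neighborSet u)) := by
  obtain ⟨z, hz, hz2⟩ := id hd
  refine ext_helly hc hH (z := z) (by simpa using hz) (fun x hx => hz2 x hx) ?_
  intro R
  by_cases hR : R = 0
  · convert hellySet_nbr hc hH u hd using 1
    ext a
    subst hR
    constructor
    · rintro ⟨x, hx, h⟩
      have : x = a := by
        by_contra hne
        have := hc.pos_dist_of_ne hne
        omega
      exact this ▸ hx
    · intro h
      exact ⟨a, h, by simp⟩
  convert hellySet_disk hH u (R+1) using 1
  ext a
  constructor
  · rintro ⟨x, hx, h⟩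
    have := hc.dist_triangle (u := u) (v := x) (w := a)
    have h2 : H.dist u x ≤ 1 := (dist_eq_one_iff_adj.2 hx).le
    show H.dist u a ≤ R + 1
    omega
  · intro (h : H.dist u a ≤ R + 1)
    obtain ⟨p, hp⟩ := hc.exists_walk_length_eq_dist u a
    cases p with
    | nil => exact ⟨z, hz, by rw [dist_eq_one_iff_adj.2 hz.symm]; omega⟩
    | @cons _ w _ h' p =>
      refine ⟨w, h', ?_⟩
      have := dist_le p
      simp at hp
      omega

/-- leaf lemma -/
theorem DHw.leaf {V : Type*} {G : SimpleGraph V} (h : DHw G) {x y z : V} (p : G.Walk x z)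
    (hyx : G.Adj y x) (hyz : y ≠ z) (hu : ∀ w ∈ p.support, G.Adj y w → w = x) :
    G.dist x z + 1 ≤ G.dist y z := by
  obtain ⟨q, hq, hl⟩ := h (.cons hyx p)
  cases q with
  | nil => exact absurd rfl hyz
  | @cons _ w _ h' q =>
    have hw : w ∈ (Walk.cons hyx p).support := hq (by simp)
    rw [Walk.support_cons, List.mem_cons] at hw
    have : w = x := by
      rcases hw with rfl | hw
      · exact absurd h' (G.irrefl)
      · exact hu w hw h'
    subst this
    have := dist_le q
    simp at hl
    omega

/-- descending walks -/
theorem exists_desc {V : Type*} {G : SimpleGraph V} (hc : G.Connected) (r : V) :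
    ∀ (n : ℕ) (p : V), G.dist r p = n →
      ∃ q : G.Walk p r, ∀ w ∈ q.support, w = p ∨ G.dist r w < G.dist r p := by
  intro n
  induction n with
  | zero =>
    intro p hp
    have : r = p := by
      by_contra hne
      have := hc.pos_dist_of_ne hne
      omega
    subst this
    exact ⟨.nil, by simp⟩
  | succ n ih =>
    intro p hp
    obtain ⟨g, hg⟩ := hc.exists_walk_length_eq_dist p r
    rw [dist_comm, hp] at hg
    cases g with
    | nil => simp at hg
    | @cons _ w _ h g =>
      have h1 : G.dist r w ≤ n := by
        rw [dist_comm]; have := dist_le g; simp at hg; omega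
      have h2 : G.dist r w = n := by
        have := hc.dist_triangle (u := r) (v := w) (w := p)
        rw [dist_eq_one_iff_adj.2 h.symm] at this
        omega
      obtain ⟨q, hq⟩ := ih w h2
      refine ⟨.cons h q, ?_⟩
      intro x hx
      rw [Walk.support_cons, List.mem_cons] at hx
      rcases hx with rfl | hx
      · exact Or.inl rfl
      · rcases hq x hx with rfl | h3 <;> right <;> omega

/-- `M` is a module -/
def IsMod {V : Type*} (G : SimpleGraph V) (M : Finset V) : Prop :=
  ∀ z, z ∉ M → ∀ a ∈ M, ∀ b ∈ M, G.Adj z a → G.Adj z b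

/-- no induced path on four vertices within `M` -/
def P4Free {V : Type*} (G : SimpleGraph V) (M : Finset V) : Prop :=
  ∀ a ∈ M, ∀ b ∈ M, ∀ c ∈ M, ∀ d ∈ M, G.Adj a b → G.Adj b c → G.Adj c d →
    ¬ G.Adj a c → ¬ G.Adj a d → ¬ G.Adj b d → a ≠ c → a ≠ d → b ≠ d → False

def Splits {V : Type*} (G : SimpleGraph V) (M : Finset V) : Prop :=
  ∃ A B : Finset V, A.Nonempty ∧ B.Nonempty ∧ (∀ x, x ∈ M ↔ x ∈ A ∨ x ∈ B) ∧ (∀ x ∈ A, x ∉ B) ∧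
    ((∀ a ∈ A, ∀ b ∈ B, ¬ G.Adj a b) ∨ (∀ a ∈ A, ∀ b ∈ B, G.Adj a b))

theorem P4Free.compl {V : Type*} {G : SimpleGraph V} {M : Finset V} (h : P4Free G M) : P4Free Gᶜ M := by
  intro a ha b hb c hc d hd h1 h2 h3 h4 h5 h6 h7 h8 h9
  simp only [compl_adj] at *
  exact h b hb d hd a ha c hc (by grind) (by grind [G.adj_comm]) (by grind)
    (by grind [G.adj_comm]) (by grind) (by grind [G.adj_comm]) (by grind) (by grind) (by grind)

theorem Splits.of_compl {V : Type*} {G : SimpleGraph V} {M : Finset V} (h : Splits Gᶜ M) : Splits G M := by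
  obtain ⟨A, B, hA, hB, hM, hd, h⟩ := h
  refine ⟨A, B, hA, hB, hM, hd, ?_⟩
  simp only [compl_adj] at h
  rcases h with h | h
  · right
    intro a ha b hb
    by_contra hn
    exact h a ha b hb ⟨fun e => hd a ha (e ▸ hb), hn⟩
  · left
    intro a ha b hb
    exact (h a ha b hb).2

theorem splits_step {V : Type*} [DecidableEq V] {G : SimpleGraph V} {M : Finset V} {v : V} (hv : v ∉ M)
    (hP : P4Free G (insert v M)) {A B : Finset V} (hA : A.Nonempty) (hB : B.Nonempty)
    (hM : ∀ x, x ∈ M ↔ x ∈ A ∨ x ∈ B) (hd : ∀ x ∈ A, x ∉ B) (h : ∀ a ∈ A, ∀ b ∈ B, ¬ G.Adj a b) :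
    Splits G (insert v M) := by
  classical
  by_cases h1 : ∃ a ∈ A, G.Adj v a
  swap
  · push Not at h1
    refine ⟨A, insert v B, hA, by simp, ?_, ?_, Or.inl ?_⟩
    · grind
    · grind
    · intro a ha b hb
      rw [Finset.mem_insert] at hb
      rcases hb with rfl | hb
      · exact fun e => h1 a ha e.symm
      · exact h a ha b hb
  by_cases h2 : ∃ b ∈ B, G.Adj v b
  swap
  · push Not at h2
    refine ⟨insert v A, B, by simp, hB, ?_, ?_, Or.inl ?_⟩
    · grind
    · grind
    · intro a ha b hb
      rw [Finset.mem_insert] at ha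
      rcases ha with rfl | ha
      · exact h2 b hb
      · exact h a ha b hb
  by_cases h3 : ∃ y ∈ M, ¬ G.Adj v y
  swap
  · push Not at h3
    refine ⟨{v}, M, by simp, ?_, by simp, by simpa using hv, Or.inr (by simpa using h3)⟩
    obtain ⟨a, ha⟩ := hA
    exact ⟨a, (hM a).2 (Or.inl ha)⟩
  obtain ⟨a, ha, hva⟩ := h1
  obtain ⟨b, hb, hvb⟩ := h2
  by_cases h4 : ∃ x ∈ M, ∃ y ∈ M, G.Adj v x ∧ ¬ G.Adj v y ∧ G.Adj x y
  swap
  · push Not at h4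
    refine ⟨insert v (M.filter (fun x => G.Adj v x)), M.filter (fun x => ¬ G.Adj v x), by simp, ?_, ?_, ?_, Or.inl ?_⟩
    · obtain ⟨y, hy⟩ := h3
      exact ⟨y, by simpa using hy⟩
    · intro x; simp; tauto
    · intro x; simp; grind
    · intro x hx y hy
      simp at hx hy
      rcases hx with rfl | hx
      · exact hy.2
      · exact h4 x hx.1 y hy.1 hx.2 hy.2
  exfalso
  obtain ⟨x, hx, y, hy, hvx, hvy, hxy⟩ := h4
  have hxv : x ≠ v := hvx.ne'
  have hyv : y ≠ v := fun e => hv (e ▸ hy)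
  have main : ∀ z ∈ M, G.Adj v z → ¬ G.Adj x z → ¬ G.Adj y z → x ≠ z → y ≠ z → False := by
    intro z hz h1 h2 h3 h4 h5
    exact hP y (by simp [hy]) x (by simp [hx]) v (by simp) z (by simp [hz]) hxy.symm hvx.symm h1
      (fun e => hvy e.symm) h3 h2 hyv h5 h4
  rcases (hM x).1 hx with hxA | hxB
  · have hyA : y ∈ A := ((hM y).1 hy).resolve_right (fun hyB => h x hxA y hyB hxy)
    exact main b ((hM b).2 (Or.inr hb)) hvb (h x hxA b hb) (h y hyA b hb)
      (fun e => hd x hxA (e ▸ hb)) (fun e => hd y hyA (e ▸ hb))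
  · have hyB : y ∈ B := ((hM y).1 hy).resolve_left (fun hyA => h y hyA x hxB hxy.symm)
    exact main a ((hM a).2 (Or.inl ha)) hva (fun e => h a ha x hxB e.symm) (fun e => h a ha y hyB e.symm)
      (fun e => hd a ha (e ▸ hxB)) (fun e => hd a ha (e ▸ hyB))

theorem splits_of_P4Free {V : Type*} [DecidableEq V] {G : SimpleGraph V} (M : Finset V) :
    2 ≤ M.card → P4Free G M → Splits G M := by
  induction M using Finset.induction_on with
  | empty => simp
  | @insert v M hv ih =>
    intro hc hP
    rw [Finset.card_insert_of_notMem hv] at hc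
    by_cases h2 : 2 ≤ M.card
    · obtain ⟨A, B, hA, hB, hM, hd, h⟩ := ih h2 (fun a ha b hb c hc d hd =>
        hP a (by simp [ha]) b (by simp [hb]) c (by simp [hc]) d (by simp [hd]))
      rcases h with h | h
      · exact splits_step hv hP hA hB hM hd h
      · apply Splits.of_compl
        refine splits_step hv hP.compl hA hB hM hd ?_
        intro a ha b hb hab
        exact hab.2 (h a ha b hb)
    · have : M.card = 1 := by omega
      obtain ⟨w, rfl⟩ := Finset.card_eq_one.1 this
      refine ⟨{v}, {w}, by simp, by simp, by simp, by simpa using hv, ?_⟩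
      simp [em']

def Twins {V : Type*} (G : SimpleGraph V) (u v : V) : Prop :=
  u ≠ v ∧ ∀ z, z ≠ u → z ≠ v → (G.Adj z u ↔ G.Adj z v)

theorem twins_of_mod {V : Type*} {G : SimpleGraph V} (n : ℕ) : ∀ (M : Finset V), M.card ≤ n →
    2 ≤ M.card → P4Free G M → IsMod G M → ∃ u v, Twins G u v := by
  classical
  induction n with
  | zero => intro M h1 h2; omega
  | succ n ih =>
    intro M h1 h2 hP hm
    obtain ⟨A, B, hA, hB, hM, hd, h⟩ := splits_of_P4Free M h2 hP
    have hcard : M.card = A.card + B.card := by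
      rw [← Finset.card_union_of_disjoint (Finset.disjoint_left.2 hd)]
      congr 1
      ext x; rw [hM, Finset.mem_union]
    have hA1 := hA.card_pos
    have hB1 := hB.card_pos
    have sub : ∀ {A : Finset V}, (∀ x ∈ A, x ∈ M) → P4Free G A := fun hs a ha b hb c hc d hd =>
      hP a (hs a ha) b (hs b hb) c (hs c hc) d (hs d hd)
    have hAM : ∀ x ∈ A, x ∈ M := fun x hx => (hM x).2 (Or.inl hx)
    have hBM : ∀ x ∈ B, x ∈ M := fun x hx => (hM x).2 (Or.inr hx)
    have mA : IsMod G A := by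
      intro z hz a ha b hb hza
      by_cases hzM : z ∈ M
      · have hzB := ((hM z).1 hzM).resolve_left hz
        rcases h with h | h
        · exact absurd hza.symm (h a ha z hzB)
        · exact (h b hb z hzB).symm
      · exact hm z hzM a (hAM a ha) b (hAM b hb) hza
    have mB : IsMod G B := by
      intro z hz a ha b hb hza
      by_cases hzM : z ∈ M
      · have hzA := ((hM z).1 hzM).resolve_right hz
        rcases h with h | h
        · exact absurd hza (h z hzA a ha)
        · exact (h z hzA b hb)
      · exact hm z hzM a (hBM a ha) b (hBM b hb) hza
    by_cases hA2 : 2 ≤ A.card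
    · exact ih A (by omega) hA2 (sub hAM) mA
    by_cases hB2 : 2 ≤ B.card
    · exact ih B (by omega) hB2 (sub hBM) mB
    obtain ⟨u, rfl⟩ := Finset.card_eq_one.1 (by omega : A.card = 1)
    obtain ⟨v, rfl⟩ := Finset.card_eq_one.1 (by omega : B.card = 1)
    refine ⟨u, v, by simpa using hd, ?_⟩
    intro z hzu hzv
    have hz : z ∉ M := by rw [hM]; simp [hzu, hzv]
    have hu := hAM u (by simp)
    have hv := hBM v (by simp)
    exact ⟨hm z hz u hu v hv, hm z hz v hv u hu⟩

theorem P4Free_of_common {V : Type*} {G : SimpleGraph V} (hG : DHw G) (M : Finset V)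
    (p : V) (hp : ∀ a ∈ M, G.Adj p a) : P4Free G M := by
  intro a ha b hb c hc d hd hab hbc hcd hac had hbd hac' had' hbd'
  have h1 := hG.leaf (.cons hbc (.cons hcd .nil)) hab had' (by
    intro w hw haw
    simp at hw
    rcases hw with rfl | rfl | rfl
    · rfl
    · exact absurd haw hac
    · exact absurd haw had)
  have h2 : G.dist a d ≤ 2 := dist_le (.cons (hp a ha).symm (.cons (hp d hd) .nil))
  have h3 := (Walk.cons hbc (.cons hcd .nil)).reachable.one_lt_dist_of_ne_of_not_adj hbd' hbd
  omega

theorem prune {V : Type*} [Finite V] [Nontrivial V] {G : SimpleGraph V} (hc : G.Connected) (hG : DHw G) :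
    (∃ u v, G.Adj v u ∧ ∀ w, G.Adj v w → w = u) ∨ ∃ u v, Twins G u v := by
  classical
  have := Fintype.ofFinite V
  obtain ⟨r, r', hrr⟩ := exists_pair_ne V
  obtain ⟨x0, hx0⟩ := Finite.exists_max (fun x => G.dist r x)
  set k := G.dist r x0 with hk
  have hkpos : 0 < k := lt_of_lt_of_le (hc.pos_dist_of_ne hrr) (hx0 r')
  have adj_lev : ∀ {x y}, G.Adj x y → G.dist r x ≤ G.dist r y + 1 := by
    intro x y h
    have := hc.dist_triangle (u := r) (v := y) (w := x)
    rwa [dist_eq_one_iff_adj.2 h.symm] at this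
  have dist_zero : ∀ {x}, G.dist r x = 0 → x = r := by
    intro x h
    by_contra hne
    have := hc.pos_dist_of_ne (Ne.symm hne)
    omega
  have lower : ∀ x, 0 < G.dist r x → ∃ p, G.Adj x p ∧ G.dist r p + 1 = G.dist r x := by
    intro x hx
    obtain ⟨g, hg⟩ := hc.exists_walk_length_eq_dist x r
    rw [dist_comm] at hg
    cases g with
    | nil => simp at hx
    | @cons _ w _ h g =>
      refine ⟨w, h, ?_⟩
      have h1 := adj_lev h
      have h2 : G.dist r w ≤ g.length := by rw [dist_comm]; exact dist_le g
      simp at hg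
      omega
  -- adjacent vertices in a level have the same lower neighbours
  have prop1 : ∀ x y p, G.Adj x y → G.dist r x = G.dist r y → G.dist r p + 1 = G.dist r x →
      G.Adj x p → G.Adj y p := by
    intro x y p hxy hl hp hxp
    by_contra hyp
    obtain ⟨q, hq⟩ := exists_desc hc r _ p rfl
    have := hG.leaf (.cons hxp q) hxy.symm (by rintro rfl; rw [dist_self] at hl; omega) (by
      intro w hw hyw
      rw [Walk.support_cons, List.mem_cons] at hw
      rcases hw with rfl | hw
      · rfl
      · rcases hq w hw with rfl | h
        · exact absurd hyw hyp
        · have := adj_lev hyw; omega)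
    rw [dist_comm (u := x), dist_comm (u := y)] at this
    omega
  by_cases hedge : ∃ x y, G.Adj x y ∧ G.dist r x = k ∧ G.dist r y = k
  · right
    obtain ⟨x, y, hxy, hx, hy⟩ := hedge
    let R : V → V → Prop := fun a b => G.Adj a b ∧ G.dist r a = k ∧ G.dist r b = k
    let M : Finset V := Finset.univ.filter (fun z => Relation.ReflTransGen R x z)
    have memM : ∀ z, z ∈ M ↔ Relation.ReflTransGen R x z := by intro z; simp [M]
    have hlev : ∀ z ∈ M, G.dist r z = k := by
      intro z hz
      rw [memM] at hz
      cases hz with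
      | refl => exact hx
      | tail _ h => exact h.2.2
    have hlow : ∀ p, G.dist r p + 1 = k → ∀ z ∈ M, (G.Adj x p ↔ G.Adj z p) := by
      intro p hp z hz
      rw [memM] at hz
      induction hz with
      | refl => rfl
      | @tail b c _ h ih =>
        rw [ih]
        exact ⟨prop1 b c p h.1 (h.2.1.trans h.2.2.symm) (hp.trans h.2.1.symm),
          prop1 c b p h.1.symm (h.2.2.trans h.2.1.symm) (hp.trans h.2.2.symm)⟩
    obtain ⟨p, hxp, hp⟩ := lower x (by omega)
    rw [hx] at hp
    refine twins_of_mod _ M le_rfl ?_ (P4Free_of_common hG M p (fun a ha => ((hlow p hp a ha).1 hxp).symm)) ?_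
    · apply Finset.one_lt_card.2
      exact ⟨x, (memM x).2 .refl, y, (memM y).2 (.single ⟨hxy, hx, hy⟩), hxy.ne⟩
    · intro z hz a ha b hb hza
      have h1 := hlev a ha
      have h2 := adj_lev hza.symm
      have h3 : G.dist r z ≤ k := hx0 z
      have h4 : G.dist r z ≠ k := by
        intro h4
        exact hz ((memM z).2 (((memM a).1 ha).tail ⟨hza.symm, h1, h4⟩))
      have h5 : G.dist r z + 1 = k := by omega
      exact ((hlow z h5 b hb).1 ((hlow z h5 a ha).2 hza.symm)).symm
  · push Not at hedge
    obtain ⟨v, hvk, hvmin⟩ := Finset.exists_min_image (Finset.univ.filter (fun z => G.dist r z = k))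
      (fun z => G.degree z) ⟨x0, by simp [hk]⟩
    simp only [Finset.mem_filter, Finset.mem_univ, true_and] at hvk hvmin
    have hdown : ∀ {z a}, G.dist r z = k → G.Adj z a → G.dist r a + 1 = k := by
      intro z a hz h
      have h1 := adj_lev h
      have h2 : G.dist r a ≤ k := hx0 a
      have h3 := hedge z a h hz
      omega
    obtain ⟨p, hvp, hp⟩ := lower v (by omega)
    by_cases hdeg : 2 ≤ G.degree v
    swap
    · left
      refine ⟨p, v, hvp, ?_⟩
      intro w hw
      have : (G.neighborFinset v).card ≤ 1 := by rw [card_neighborFinset_eq_degree]; omega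
      exact Finset.card_le_one.1 this w (by simpa using hw) p (by simpa using hvp)
    · right
      refine twins_of_mod _ (G.neighborFinset v) le_rfl (by simpa using hdeg)
        (P4Free_of_common hG _ v (by simp)) ?_
      intro z hz a ha b hb hza
      rw [mem_neighborFinset] at hz ha hb
      by_contra hzb
      have hla := hdown hvk ha
      have hlb := hdown hvk hb
      have hzv : z ≠ v := by rintro rfl; exact hzb hb
      have hab : a ≠ b := by rintro rfl; exact hzb hza
      have hzb' : z ≠ b := by rintro rfl; exact hz hb
      have hza' : z ≠ a := hza.ne
      have l1 := adj_lev hza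
      have l2 := adj_lev hza.symm
      obtain ⟨qb, hqb⟩ := exists_desc hc r _ b rfl
      obtain ⟨qz, hqz⟩ := exists_desc hc r _ z rfl
      have hvz2 : G.dist v z ≤ 2 := dist_le (.cons ha (.cons hza.symm .nil))
      have hbz2 := hc.one_lt_dist_of_ne_of_not_adj (Ne.symm hzb') (fun e => hzb e.symm)
      have hnoqb : ∀ w ∈ qb.support, G.Adj v w → w = b := by
        intro w hw hvw
        rcases hqb w hw with rfl | h
        · rfl
        · have := hdown hvk hvw; omega
      rcases lt_trichotomy (G.dist r z + 1) k with hlz | hlz | hlz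
      · -- level k-2
        have hlz' : G.dist r z + 1 = G.dist r a := by omega
        by_cases hadj : G.Adj a b
        · exact hzb (prop1 a b z hadj (by omega) hlz' hza.symm).symm
        · have := hG.leaf (.cons ha (.cons hza.symm qz)) hb.symm (by
            rintro rfl; simp at hlb; omega) (by
            intro w hw hbw
            simp only [Walk.support_cons, List.mem_cons] at hw
            rcases hw with rfl | rfl | hw
            · rfl
            · exact absurd hbw.symm hadj
            · rcases hqz w hw with rfl | h
              · exact absurd hbw.symm hzb
              · have := adj_lev hbw; omega)
          rw [dist_comm (u := v), dist_comm (u := b)] at this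
          omega
      · -- level k-1
        have := hG.leaf (qb.append qz.reverse) hb hzv.symm (by
          intro w hw hvw
          rw [Walk.mem_support_append_iff] at hw
          rcases hw with hw | hw
          · exact hnoqb w hw hvw
          · simp only [Walk.support_reverse, List.mem_reverse] at hw
            rcases hqz w hw with rfl | h
            · exact absurd hvw hz
            · have := hdown hvk hvw; omega)
        omega
      · -- level k
        have hzk : G.dist r z = k := by have : G.dist r z ≤ k := hx0 z; omega
        have : ∃ c, G.Adj z c ∧ ¬ G.Adj v c := by
          by_contra hn
          push Not at hn
          have hlt : (G.neighborFinset z).card < (G.neighborFinset v).card := by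
            apply Finset.card_lt_card
            rw [Finset.ssubset_iff_of_subset (by intro c hc; simp at hc ⊢; exact hn c hc)]
            exact ⟨b, by simpa using hb, by simpa using hzb⟩
          have := hvmin z hzk
          simp only [card_neighborFinset_eq_degree] at hlt
          omega
        obtain ⟨c, hzc, hvc⟩ := this
        obtain ⟨qc, hqc⟩ := exists_desc hc r _ c rfl
        have hlc := hdown hzk hzc
        have := hG.leaf ((qb.append qc.reverse).append (.cons hzc.symm .nil)) hb hzv.symm (by
          intro w hw hvw
          rw [Walk.mem_support_append_iff, Walk.mem_support_append_iff] at hw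
          rcases hw with (hw | hw) | hw
          · exact hnoqb w hw hvw
          · simp only [Walk.support_reverse, List.mem_reverse] at hw
            rcases hqc w hw with rfl | h
            · exact absurd hvw hvc
            · have := hdown hvk hvw; omega
          · simp at hw
            rcases hw with rfl | rfl
            · exact absurd hvw hvc
            · exact absurd hvw hz)
        omega

/-- degree as a natural number -/
noncomputable def dg {V : Type*} (G : SimpleGraph V) (a : V) : ℕ := (G.neighborSet a).ncard

theorem dg_none {W : Type*} (H : SimpleGraph W) (N : Set W) : dg (ext H N) none = N.ncard := by
  have : (ext H N).neighborSet none = some '' N := by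
    ext x
    rcases x with _ | x <;> simp
  rw [dg, this, Set.ncard_image_of_injective _ (Option.some_injective W)]

theorem dg_some_mem {W : Type*} [Finite W] (H : SimpleGraph W) (N : Set W) {a : W} (ha : a ∈ N) :
    dg (ext H N) (some a) = dg H a + 1 := by
  have : (ext H N).neighborSet (some a) = insert none (some '' (H.neighborSet a)) := by
    ext x
    rcases x with _ | x <;> simp [ha]
  rw [dg, this, Set.ncard_insert_of_notMem (by simp), Set.ncard_image_of_injective _ (Option.some_injective W)]
  rfl

theorem dg_some_notMem {W : Type*} (H : SimpleGraph W) (N : Set W) {a : W} (ha : a ∉ N) :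
    dg (ext H N) (some a) = dg H a := by
  have : (ext H N).neighborSet (some a) = some '' (H.neighborSet a) := by
    ext x
    rcases x with _ | x <;> simp [ha]
  rw [dg, this, Set.ncard_image_of_injective _ (Option.some_injective W)]
  rfl

theorem edges_ext {W : Type*} [Finite W] (H : SimpleGraph W) (N : Set W) :
    (ext H N).edgeSet.ncard = H.edgeSet.ncard + N.ncard := by
  have : (ext H N).edgeSet = (Sym2.map some '' H.edgeSet) ∪ ((fun a => s(none, some a)) '' N) := by
    ext e
    induction e using Sym2.ind with
    | _ x y =>
    simp only [mem_edgeSet, Set.mem_union, Set.mem_image]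
    constructor
    · intro h
      rcases x with _ | x <;> rcases y with _ | y <;> simp at h
      · exact Or.inr ⟨y, h, rfl⟩
      · exact Or.inr ⟨x, h, Sym2.eq_swap⟩
      · exact Or.inl ⟨s(x, y), h, rfl⟩
    · rintro (⟨e, he, h⟩ | ⟨a, ha, h⟩)
      · induction e using Sym2.ind with
        | _ a b =>
        rw [Sym2.map_mk] at h
        rw [← mem_edgeSet, ← h]
        exact he
      · rw [← mem_edgeSet, ← h]
        exact ha
  rw [this, Set.ncard_union_eq]
  · rw [Set.ncard_image_of_injective _ (Sym2.map.injective (Option.some_injective W)),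
      Set.ncard_image_of_injective]
    intro a b h
    simpa using h
  · rw [Set.disjoint_left]
    rintro _ ⟨e, he, rfl⟩ ⟨a, ha, h⟩
    induction e using Sym2.ind with
    | _ x y => simp at h

def Good {V : Type*} (G : SimpleGraph V) : Prop :=
  ∃ (W : Type) (_ : Finite W) (H : SimpleGraph W) (φ : V → W),
    Nat.card W ≤ 2 * Nat.card V ∧ H.edgeSet.ncard ≤ 4 * G.edgeSet.ncard ∧
    H.Connected ∧ HellyGraph H ∧ DHw H ∧ Function.Injective φ ∧
    (∀ a b, G.Adj a b ↔ H.Adj (φ a) (φ b)) ∧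
    ∀ a, dg H (φ a) ≤ 2 * dg G a ∧ (dg G a = 0 ∨ dg H (φ a) < 2 * dg G a ∨ Dominated H (φ a))

theorem Good.of_iso {V V' : Type*} {G : SimpleGraph V} {G' : SimpleGraph V'} (e : G ≃g G')
    (h : Good G) : Good G' := by
  obtain ⟨W, hW, H, φ, h1, h2, h3, h4, h5, h6, h7, h8⟩ := h
  have hdg : ∀ b, dg G' b = dg G (e.symm b) := by
    intro b
    have : G'.neighborSet b = e '' (G.neighborSet (e.symm b)) := by
      ext x
      constructor
      · intro hx
        exact ⟨e.symm x, (e.symm.map_adj_iff).2 hx, by simp⟩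
      · rintro ⟨y, hy, rfl⟩
        have := (e.map_adj_iff).2 hy
        simpa using this
    rw [dg, this, Set.ncard_image_of_injective _ e.injective]
    rfl
  have hed : G'.edgeSet.ncard = G.edgeSet.ncard := by
    rw [← Nat.card_coe_set_eq, ← Nat.card_coe_set_eq]
    exact (Nat.card_congr e.mapEdgeSet).symm
  refine ⟨W, hW, H, φ ∘ e.symm, ?_, ?_, h3, h4, h5, h6.comp e.symm.injective, ?_, ?_⟩
  · rwa [← Nat.card_congr e.toEquiv]
  · rwa [hed]
  · intro a b
    rw [← e.symm.map_adj_iff]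
    exact h7 _ _
  · intro a
    rw [hdg]
    exact h8 _

theorem map_inj {V W : Type*} {φ : V → W} (h : Function.Injective φ) :
    Function.Injective (Option.map φ) := Option.map_injective h

theorem map_adj {V W : Type*} {G : SimpleGraph V} {H : SimpleGraph W} {φ : V → W}
    (h : ∀ a b, G.Adj a b ↔ H.Adj (φ a) (φ b)) {N : Set V} {N' : Set W} (hN : ∀ a, a ∈ N ↔ φ a ∈ N')
    (a b : Option V) : (ext G N).Adj a b ↔ (ext H N').Adj (a.map φ) (b.map φ) := by
  rcases a with _ | a <;> rcases b with _ | b <;> simp [h, hN]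

theorem dom_ext {W : Type*} {H : SimpleGraph W} {N : Set W} {x : W} (hx : x ∉ N) (h : Dominated H x) :
    Dominated (ext H N) (some x) := by
  obtain ⟨z, hz, h⟩ := h
  refine ⟨some z, hz, ?_⟩
  rintro (_ | w) hw
  · exact absurd hw hx
  · rcases h w hw with rfl | h
    · exact Or.inl rfl
    · exact Or.inr h

theorem card_option' (W : Type*) [Finite W] : Nat.card (Option W) = Nat.card W + 1 :=
  Finite.card_option

theorem Good.pendant {V : Type*} [Finite V] {G : SimpleGraph V} (h : Good G) (u : V) :
    Good (ext G {u}) := by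
  obtain ⟨W, hW, H, φ, h1, h2, h3, h4, h5, h6, h7, h8⟩ := h
  have hN : ∀ a, a ∈ ({u} : Set V) ↔ φ a ∈ ({φ u} : Set W) := by
    intro a; simp [h6.eq_iff]
  refine ⟨Option W, inferInstance, ext H {φ u}, Option.map φ, ?_, ?_, ext_connected h3 (by simp),
    ext_pendant_helly h3 h4 _, ext_pendant_DHw _ h5, map_inj h6, map_adj h7 hN, ?_⟩
  · rw [card_option', card_option']; omega
  · rw [edges_ext, edges_ext, Set.ncard_singleton, Set.ncard_singleton]; omega
  · rintro (_ | a)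
    · rw [Option.map_none, dg_none, dg_none, Set.ncard_singleton, Set.ncard_singleton]; omega
    · rw [Option.map_some]
      have := h8 a
      by_cases ha : a ∈ ({u} : Set V)
      · rw [dg_some_mem _ _ ha, dg_some_mem _ _ ((hN a).1 ha)]; omega
      · have ha' := fun e => ha ((hN a).2 e)
        rw [dg_some_notMem _ _ ha, dg_some_notMem _ _ ha']
        exact ⟨this.1, this.2.imp_right (Or.imp_right (dom_ext ha'))⟩

theorem ncard_closed {V : Type*} [Finite V] (G : SimpleGraph V) (u : V) :
    (insert u (G.neighborSet u)).ncard = dg G u + 1 := by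
  rw [Set.ncard_insert_of_notMem (by simp)]; rfl

theorem Good.trueTwin {V : Type*} [Finite V] {G : SimpleGraph V} (h : Good G) (u : V) :
    Good (ext G (insert u (G.neighborSet u))) := by
  obtain ⟨W, hW, H, φ, h1, h2, h3, h4, h5, h6, h7, h8⟩ := h
  have hN : ∀ a, a ∈ insert u (G.neighborSet u) ↔ φ a ∈ insert (φ u) (H.neighborSet (φ u)) := by
    intro a; simp [h6.eq_iff, h7]
  have hu := h8 u
  refine ⟨Option W, inferInstance, ext H (insert (φ u) (H.neighborSet (φ u))), Option.map φ, ?_, ?_,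
    ext_connected h3 (by simp),
    ext_true_helly h3 h4 _, ext_true_DHw _ h5, map_inj h6, map_adj h7 hN, ?_⟩
  · rw [card_option', card_option']; omega
  · rw [edges_ext, edges_ext, ncard_closed, ncard_closed]; omega
  · rintro (_ | a)
    · rw [Option.map_none, dg_none, dg_none, ncard_closed, ncard_closed]; omega
    · rw [Option.map_some]
      have := h8 a
      by_cases ha : a ∈ insert u (G.neighborSet u)
      · rw [dg_some_mem _ _ ha, dg_some_mem _ _ ((hN a).1 ha)]; omega
      · have ha' := fun e => ha ((hN a).2 e)
        rw [dg_some_notMem _ _ ha, dg_some_notMem _ _ ha']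
        exact ⟨this.1, this.2.imp_right (Or.imp_right (dom_ext ha'))⟩

theorem Good.falseTwin {V : Type*} [Finite V] {G : SimpleGraph V} (h : Good G) (u : V)
    (hu0 : dg G u ≠ 0) : Good (ext G (G.neighborSet u)) := by
  obtain ⟨W, hW, H, φ, h1, h2, h3, h4, h5, h6, h7, h8⟩ := h
  have hN : ∀ a, a ∈ G.neighborSet u ↔ φ a ∈ H.neighborSet (φ u) := by
    intro a; simp [h7]
  have hu := h8 u
  have hnG : (G.neighborSet u).ncard = dg G u := rfl
  by_cases hdom : Dominated H (φ u)
  · have hnH : (H.neighborSet (φ u)).ncard = dg H (φ u) := rfl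
    obtain ⟨z, hz, hz2⟩ := id hdom
    refine ⟨Option W, inferInstance, ext H (H.neighborSet (φ u)), Option.map φ, ?_, ?_,
      ext_connected h3 ⟨z, hz⟩,
      ext_false_helly h3 h4 _ hdom, ext_false_DHw _ h5, map_inj h6, map_adj h7 hN, ?_⟩
    · rw [card_option', card_option']; omega
    · rw [edges_ext, edges_ext]; omega
    · rintro (_ | a)
      · rw [Option.map_none, dg_none, dg_none]
        refine ⟨by omega, Or.inr (Or.inr ⟨some z, hz, ?_⟩)⟩
        rintro (_ | w) hw
        · exact absurd hw (by simp)
        · rcases hz2 w hw with rfl | h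
          · exact Or.inl rfl
          · exact Or.inr h
      · rw [Option.map_some]
        have := h8 a
        by_cases ha : a ∈ G.neighborSet u
        · rw [dg_some_mem _ _ ha, dg_some_mem _ _ ((hN a).1 ha)]; omega
        · have ha' := fun e => ha ((hN a).2 e)
          rw [dg_some_notMem _ _ ha, dg_some_notMem _ _ ha']
          exact ⟨this.1, this.2.imp_right (Or.imp_right (dom_ext ha'))⟩
  · have hlt : dg H (φ u) < 2 * dg G u := by tauto
    set x := φ u with hx
    set H1 := ext H (insert x (H.neighborSet x)) with hH1
    have hx1 : x ∈ insert x (H.neighborSet x) := by simp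
    have c1 : H1.Connected := ext_connected h3 (by simp)
    have hd1 : dg H1 (some x) = dg H x + 1 := dg_some_mem _ _ hx1
    have hnH : (H1.neighborSet (some x)).ncard = dg H x + 1 := hd1
    have dom1 : Dominated H1 (some x) := by
      refine ⟨none, hx1, ?_⟩
      rintro (_ | w) hw
      · exact Or.inl rfl
      · exact Or.inr (Or.inr hw)
    have hN1 : ∀ a, a ∈ G.neighborSet u ↔ some (φ a) ∈ H1.neighborSet (some x) := hN
    have h71 : ∀ a b, G.Adj a b ↔ H1.Adj (some (φ a)) (some (φ b)) := h7
    have hnn : (none : Option W) ∈ H1.neighborSet (some x) := hx1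
    -- domination of `none` and of `x` in the big graph by the shadow
    refine ⟨Option (Option W), inferInstance, ext H1 (H1.neighborSet (some x)),
      Option.map (fun a => some (φ a)), ?_, ?_, ext_connected c1 ⟨none, hx1⟩,
      ext_false_helly c1 (ext_true_helly h3 h4 _) _ dom1, ext_false_DHw _ (ext_true_DHw _ h5),
      map_inj ((Option.some_injective W).comp h6), map_adj h71 hN1, ?_⟩
    · rw [card_option', card_option', card_option']; omega
    · rw [edges_ext, edges_ext, edges_ext, ncard_closed]; omega
    · rintro (_ | a)
      · rw [Option.map_none, dg_none, dg_none]
        refine ⟨by omega, Or.inr (Or.inr ⟨some none, hx1, ?_⟩)⟩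
        rintro (_ | _ | w) hw
        · exact absurd hw (by simp)
        · exact Or.inl rfl
        · exact Or.inr (Or.inr hw)
      · rw [Option.map_some]
        have ih := h8 a
        by_cases hau : a = u
        · have hxa : φ a = x := by rw [hau]
          rw [hxa, hau, dg_some_notMem G _ (by simp), dg_some_notMem H1 _ (by simp), hd1]
          refine ⟨by omega, Or.inr (Or.inr (dom_ext (by simp) dom1))⟩
        by_cases ha : a ∈ G.neighborSet u
        · have ha' : H.Adj x (φ a) := (hN a).1 ha
          have hd2 : dg H1 (some (φ a)) = dg H (φ a) + 1 := dg_some_mem _ _ (Or.inr ha')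
          rw [dg_some_mem _ _ ha, dg_some_mem _ _ ((hN1 a).1 ha), hd2]
          refine ⟨by omega, ?_⟩
          right
          rcases ih.2 with h0 | h0 | ⟨z, hz, hz2⟩
          · exfalso
            rw [dg, Set.ncard_eq_zero] at h0
            have hmem : u ∈ G.neighborSet a := G.adj_symm ha
            rw [h0] at hmem
            exact hmem
          · left; omega
          · right
            by_cases hzx : z = x
            · refine ⟨some none, Or.inr ha', ?_⟩
              rintro (_ | _ | w) hw
              · exact Or.inr hx1
              · exact Or.inl rfl
              · right
                rcases hz2 w hw with h | h
                · exact Or.inl (h.trans hzx)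
                · exact Or.inr (hzx ▸ h)
            · have hzx' : H.Adj x z := by
                rcases hz2 x ha'.symm with h | h
                · exact absurd h.symm hzx
                · exact h.symm
              refine ⟨some (some z), hz, ?_⟩
              rintro (_ | _ | w) hw
              · exact Or.inr hzx'
              · exact Or.inr (Or.inr hzx')
              · rcases hz2 w hw with rfl | h
                · exact Or.inl rfl
                · exact Or.inr h
        · have ha' : φ a ∉ insert x (H.neighborSet x) := by
            rintro (h | h)
            · exact hau (h6 h)
            · exact ha ((hN a).2 h)
          have ha1 := fun e => ha ((hN1 a).2 e)
          have hd2 : dg H1 (some (φ a)) = dg H (φ a) := dg_some_notMem _ _ ha'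
          rw [dg_some_notMem _ _ ha, dg_some_notMem _ _ ha1, hd2]
          exact ⟨ih.1, ih.2.imp_right (Or.imp_right (fun h => dom_ext ha1 (dom_ext ha' h)))⟩

noncomputable def extIso {V : Type*} [DecidableEq V] (G : SimpleGraph V) (v : V) :
    ext (G.induce {w | w ≠ v}) {w | G.Adj v w} ≃g G where
  toEquiv := Equiv.optionSubtypeNe v
  map_rel_iff' := by
    intro a b
    have hn : Equiv.optionSubtypeNe v none = v := Equiv.optionSubtypeNe_none v
    have hs : ∀ b : {w // w ≠ v}, Equiv.optionSubtypeNe v (some b) = b :=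
      fun b => Equiv.optionSubtypeNe_some v b
    rcases a with _ | a <;> rcases b with _ | b
    · exact ⟨fun h => absurd h (G.irrefl), fun h => absurd h (by simp)⟩
    · change G.Adj _ (Equiv.optionSubtypeNe v (some (⟨b.1, b.2⟩ : {w // w ≠ v}))) ↔ G.Adj v b
      rw [hs, hn]
    · change G.Adj (Equiv.optionSubtypeNe v (some (⟨a.1, a.2⟩ : {w // w ≠ v}))) _ ↔ G.Adj v a
      rw [hs, hn, G.adj_comm]
    · change G.Adj (Equiv.optionSubtypeNe v (some (⟨a.1, a.2⟩ : {w // w ≠ v})))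
        (Equiv.optionSubtypeNe v (some (⟨b.1, b.2⟩ : {w // w ≠ v}))) ↔ G.Adj a b
      rw [hs, hs]

theorem connected_remove {V : Type*} {G : SimpleGraph V} (hc : G.Connected) {u v : V} (huv : u ≠ v)
    (h : ∀ w, w ≠ u → w ≠ v → G.Adj w v → G.Adj w u) : (G.induce {w | w ≠ v}).Connected := by
  classical
  let f : V → {w | w ≠ v} := fun w => if hw : w = v then ⟨u, huv⟩ else ⟨w, hw⟩
  have hf : ∀ x y, G.Adj x y → (G.induce {w | w ≠ v}).Adj (f x) (f y) ∨ f x = f y := by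
    intro x y hxy
    by_cases hx : x = v
    · have hy : y ≠ v := fun e => hxy.ne (hx.trans e.symm)
      subst hx
      by_cases hyu : y = u
      · right; simp [f, hyu, huv]
      · left; simpa [f, hy] using (h y hyu hy hxy.symm).symm
    · by_cases hy : y = v
      · subst hy
        by_cases hxu : x = u
        · right; simp [f, hxu, huv]
        · left; simpa [f, hx] using h x hxu hx hxy
      · left; simpa [f, hx, hy] using hxy
  refine { preconnected := ?_, nonempty := ⟨⟨u, huv⟩⟩ }
  intro a b
  obtain ⟨p⟩ := hc.preconnected a.1 b.1
  obtain ⟨q, -⟩ := push_walk f hf p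
  have ha : f a.1 = a := by have := a.2; simp only [Set.mem_ofPred_eq] at this; simp [f, this]
  have hb : f b.1 = b := by have := b.2; simp only [Set.mem_ofPred_eq] at this; simp [f, this]
  rw [ha, hb] at q
  exact ⟨q⟩

theorem good_of_DHw.{u} (n : ℕ) : ∀ {V : Type u} [Finite V] (G : SimpleGraph V), Nat.card V = n →
    G.Connected → DHw G → Good G := by
  classical
  induction n with
  | zero =>
    intro V _ G hn hc
    have := hc.nonempty
    exact absurd hn Nat.card_pos.ne'
  | succ n ih =>
    intro V _ G hn hc hG
    rcases subsingleton_or_nontrivial V with hs | hs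
    · have hna : ∀ a b, ¬ G.Adj a b := fun a b h => h.ne (Subsingleton.elim a b)
      refine ⟨Unit, inferInstance, ⊥, fun _ => (), ?_, by simp, ?_, ?_, ?_, ?_, ?_, ?_⟩
      · simp; omega
      · exact { preconnected := fun a b => by rw [Subsingleton.elim a b], nonempty := ⟨()⟩ }
      · intro S r _
        exact ⟨(), by simp⟩
      · intro a b p
        cases a; cases b
        exact ⟨.nil, by simp, by simp⟩
      · intro a b _; exact Subsingleton.elim a b
      · intro a b; simpa using hna a b
      · intro a
        have h0 : dg G a = 0 := by
          rw [dg, Set.ncard_eq_zero]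
          ext b; simpa using hna a b
        have h1 : dg (⊥ : SimpleGraph Unit) () = 0 := by
          rw [dg, Set.ncard_eq_zero]
          ext b; simp
        rw [h0, h1]; simp
    · have hcard : ∀ v : V, Nat.card {w | w ≠ v} = n := by
        intro v
        have := Nat.card_congr (Equiv.optionSubtypeNe v)
        rw [card_option'] at this
        have h2 : Nat.card {w | w ≠ v} = Nat.card {w // w ≠ v} := rfl
        omega
      rcases prune hc hG with ⟨u, v, hvu, hv⟩ | ⟨u, v, huv, ht⟩
      · have hc' := connected_remove hc hvu.ne' (fun w hwu hwv h => absurd (hv w h.symm) hwu)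
        have := (ih _ (hcard v) hc' (hG.induce _)).pendant ⟨u, hvu.ne'⟩
        refine Good.of_iso (extIso G v) ?_
        convert this using 2
        ext ⟨w, hw⟩
        simp only [Set.mem_ofPred_eq, Set.mem_singleton_iff, Subtype.mk.injEq]
        exact ⟨hv w, fun e => e ▸ hvu⟩
      · have hc' := connected_remove hc huv (fun w hwu hwv h => (ht w hwu hwv).2 h)
        have hgood := ih _ (hcard v) hc' (hG.induce _)
        refine Good.of_iso (extIso G v) ?_
        by_cases hadj : G.Adj v u
        · convert hgood.trueTwin ⟨u, huv⟩ using 2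
          ext ⟨w, hw⟩
          by_cases hwu : w = u
          · subst hwu; simpa using hadj
          · have := ht w hwu hw
            simp [hwu, G.adj_comm v, G.adj_comm u, this]
        · have hset : ({w | G.Adj v w} : Set {w | w ≠ v}) =
              (G.induce {w | w ≠ v}).neighborSet ⟨u, huv⟩ := by
            ext ⟨w, hw⟩
            by_cases hwu : w = u
            · subst hwu; simpa using hadj
            · have := ht w hwu hw
              simp [G.adj_comm v, G.adj_comm u, this]
          rw [hset]
          apply hgood.falseTwin
          obtain ⟨p⟩ := hc.preconnected v u
          cases p with
          | nil => exact absurd rfl huv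
          | @cons _ w _ h p =>
            have hwv : w ≠ v := h.ne'
            have : (⟨w, hwv⟩ : {w | w ≠ v}) ∈ (G.induce {w | w ≠ v}).neighborSet ⟨u, huv⟩ := by
              rw [← hset]; exact h
            rw [dg, Ne, Set.ncard_eq_zero]
            intro he
            rw [he] at this
            exact this

theorem helly_of_iso {V W : Type*} {H : SimpleGraph V} {K : SimpleGraph W} (e : H ≃g K)
    (hd : ∀ a b, H.dist a b = K.dist (e a) (e b)) (h : HellyGraph H) : HellyGraph K := by
  intro S r hS
  obtain ⟨c, hc⟩ := h (e ⁻¹' S) (r ∘ e) (by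
    intro u hu v hv
    obtain ⟨w, h1, h2⟩ := hS _ hu _ hv
    refine ⟨e.symm w, ?_, ?_⟩ <;> rw [hd] <;> simpa)
  refine ⟨e c, ?_⟩
  intro v hv
  have := hc (e.symm v) (by simpa using hv)
  rw [hd] at this
  simpa using this

/-- Every distance-hereditary graph `G` embeds isometrically into a distance-hereditary
Helly graph with at most `2|V(G)|` vertices and at most `4|E(G)|` edges. -/
theorem distanceHereditary_hellification_linear_size
    {V : Type*} [Fintype V] (G : SimpleGraph V) (hconn : G.Connected)
    (hDH : DistanceHereditary G) :
    ∃ (n : ℕ) (H : SimpleGraph (Fin n)),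
      n ≤ 2 * Fintype.card V ∧
      H.edgeSet.ncard ≤ 4 * G.edgeSet.ncard ∧
      H.Connected ∧ HellyGraph H ∧ DistanceHereditary H ∧
      ∃ φ : V → Fin n, Function.Injective φ ∧
        (∀ a b : V, G.Adj a b → H.Adj (φ a) (φ b)) ∧
        (∀ a b : V, G.dist a b = H.dist (φ a) (φ b)) := by
  obtain ⟨W, hW, H, φ, h1, h2, h3, h4, h5, h6, h7, h8⟩ :=
    good_of_DHw _ G rfl hconn (DHw.of_DH hDH)
  let e : W ≃ Fin (Nat.card W) := Finite.equivFin W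
  let K : SimpleGraph (Fin (Nat.card W)) := H.comap e.symm
  let ei : H ≃g K := { toEquiv := e, map_rel_iff' := by intro a b; simp [K] }
  have hKH : ∀ x y, K.Adj x y ↔ H.Adj (e.symm x) (e.symm y) := fun x y => Iff.rfl
  have hKc : K.Connected := ei.connected_iff.1 h3
  have hKd : DHw K := by
    refine DHw_of_fibre (H := H) e.symm (fun x y h => Or.inl h) (fun x y h => h) ?_ h5
    intro x y w h1 h2
    exact absurd (e.symm.injective h1) h2
  have hadj : ∀ a b, H.Adj a b ↔ K.Adj (e a) (e b) := by intro a b; simp [K]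
  have hadj2 : ∀ a b, G.Adj a b ↔ K.Adj (e (φ a)) (e (φ b)) := fun a b => (h7 a b).trans (hadj _ _)
  refine ⟨Nat.card W, K, ?_, ?_, hKc, helly_of_iso ei ?_ h4, hKd.toDH, fun a => e (φ a),
    e.injective.comp h6, fun a b h => (hadj2 a b).1 h, ?_⟩
  · rwa [← Nat.card_eq_fintype_card]
  · have : K.edgeSet.ncard = H.edgeSet.ncard := by
      rw [← Nat.card_coe_set_eq, ← Nat.card_coe_set_eq]
      exact (Nat.card_congr ei.mapEdgeSet).symm
    rwa [this]
  · exact hKd.isometric h3 e e.injective hadj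
  · exact hKd.isometric hconn _ (e.injective.comp h6) hadj2
end
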